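/- Let x > 0 be real with x not an integer. Then ∑_{n=1}^∞ σ_{1/2}(n) n^{−1/2} e^{−2π√(2nx)} sin(2π√(2nx)) = ζ(1/2)/(2π√(2x)) − ( 1/(2πx) + π√(2x) )·ζ(−1/2) + (x/(π√2)) ∑_{n=1}^∞ σ_{1/2}(n) n^{−1/2} (√x − √(2n))/(x² + n²). -/

import Mathlib

open Complex Finset
open scoped Real BigOperators Classical

/-- Generalized divisor sum `σ_r(n) = ∑_{d ∣ n} d^r` with real exponent. -/
noncomputable def rsigma (r : ℝ) (n : ℕ) : ℝ := ∑ d ∈ n.divisors, (d : ℝ) ^ r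

section L1
open MeasureTheory Set Filter Topology

lemma W_int (a : ℝ) (ha : 0 < a) :
    IntegrableOn (fun t : ℝ => t ^ (-(3/2) : ℝ) * Real.exp (-a / t)) (Ioi 0) ∧
    ∫ t in Ioi (0:ℝ), t ^ (-(3/2) : ℝ) * Real.exp (-a / t) = √(π / a) := by
  have h0 : IntegrableOn (fun t : ℝ => t ^ (-(1/2) : ℝ) * Real.exp (-a * t)) (Ioi 0) := by
    have := integrableOn_rpow_mul_exp_neg_mul_rpow (s := -(1/2)) (p := 1) (b := a) (by norm_num) one_pos ha
    simpa using this
  have key : ∀ t ∈ Ioi (0:ℝ), (|(-1:ℝ)| * t ^ ((-1:ℝ) - 1)) • ((t ^ (-1:ℝ)) ^ (-(1/2) : ℝ) * Real.exp (-a * t ^ (-1:ℝ)))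
      = t ^ (-(3/2) : ℝ) * Real.exp (-a / t) := by
    intro t ht
    have ht : 0 < t := ht
    rw [← Real.rpow_mul ht.le, Real.rpow_neg_one t]
    simp only [abs_neg, abs_one, one_mul, smul_eq_mul]
    rw [← mul_assoc, ← Real.rpow_add ht]
    norm_num [div_eq_mul_inv]
  constructor
  · have := (integrableOn_Ioi_comp_rpow_iff (fun t : ℝ => t ^ (-(1/2) : ℝ) * Real.exp (-a * t)) (p := -1) (by norm_num)).2 h0
    exact this.congr_fun key measurableSet_Ioi
  · rw [← setIntegral_congr_fun measurableSet_Ioi key, integral_comp_rpow_Ioi (fun t : ℝ => t ^ (-(1/2) : ℝ) * Real.exp (-a * t)) (by norm_num : (-1:ℝ) ≠ 0)]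
    have := Real.integral_rpow_mul_exp_neg_mul_Ioi (a := 1/2) (r := a) (by norm_num) ha
    norm_num at this ⊢
    rw [this, Real.Gamma_one_half_eq, ← Real.sqrt_eq_rpow, mul_comm, Real.sqrt_inv, div_eq_mul_inv, Real.sqrt_mul Real.pi_pos.le, Real.sqrt_inv]

noncomputable def Phi (a : ℝ) (b : ℂ) : ℂ :=
  ∫ t in Ioi (0:ℝ), ((t ^ (-(3/2) : ℝ) * Real.exp (-a / t) : ℝ) : ℂ) * cexp (-b * t)

lemma Phi_meas (a : ℝ) (b : ℂ) : AEStronglyMeasurable (fun t : ℝ => ((t ^ (-(3/2) : ℝ) * Real.exp (-a / t) : ℝ) : ℂ) * cexp (-b * t)) (volume.restrict (Ioi 0)) := by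
  apply Measurable.aestronglyMeasurable
  fun_prop

lemma Phi_meas' (a : ℝ) (b : ℂ) : AEStronglyMeasurable (fun t : ℝ => ((t ^ (-(3/2) : ℝ) * Real.exp (-a / t) : ℝ) : ℂ) * (cexp (-b * t) * (-t))) (volume.restrict (Ioi 0)) := by
  apply Measurable.aestronglyMeasurable
  fun_prop

lemma Phi_bd (a : ℝ) (b : ℂ) (hb : 0 ≤ b.re) {t : ℝ} (ht : 0 < t) :
   ‖((t ^ (-(3/2) : ℝ) * Real.exp (-a / t) : ℝ) : ℂ) * cexp (-b * t)‖ ≤ t ^ (-(3/2) : ℝ) * Real.exp (-a / t) := by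
  rw [norm_mul, Complex.norm_real, Real.norm_of_nonneg (by positivity), Complex.norm_exp]
  apply mul_le_of_le_one_right (by positivity)
  rw [Real.exp_le_one_iff]
  simp
  positivity

lemma Phi_integrable (a : ℝ) (ha : 0 < a) (b : ℂ) (hb : 0 ≤ b.re) :
   IntegrableOn (fun t : ℝ => ((t ^ (-(3/2) : ℝ) * Real.exp (-a / t) : ℝ) : ℂ) * cexp (-b * t)) (Ioi 0) := by
  refine Integrable.mono' (W_int a ha).1 (Phi_meas a b) ?_
  filter_upwards [ae_restrict_mem measurableSet_Ioi] with t ht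
  exact Phi_bd a b hb ht

lemma Phi_cont (a : ℝ) (ha : 0 < a) : ContinuousOn (Phi a) {b : ℂ | 0 ≤ b.re} := by
  apply continuousOn_of_dominated (bound := fun t : ℝ => t ^ (-(3/2) : ℝ) * Real.exp (-a / t))
  · intro b hb; exact Phi_meas a b
  · intro b hb
    filter_upwards [ae_restrict_mem measurableSet_Ioi] with t ht
    exact Phi_bd a b hb ht
  · exact (W_int a ha).1
  · filter_upwards with t
    fun_prop

lemma Phi_deriv (a : ℝ) (ha : 0 < a) (b : ℂ) (hb : 0 < b.re) :
    HasDerivAt (Phi a) (∫ t in Ioi (0:ℝ), ((t ^ (-(3/2) : ℝ) * Real.exp (-a / t) : ℝ) : ℂ) * (cexp (-b * t) * (-t))) b := by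
  have hd : 0 < b.re / 2 := by positivity
  have h0 : IntegrableOn (fun t : ℝ => t ^ (-(1/2) : ℝ) * Real.exp (-(b.re/2) * t)) (Ioi 0) := by
    have := integrableOn_rpow_mul_exp_neg_mul_rpow (s := -(1/2)) (p := 1) (b := b.re/2) (by norm_num) one_pos hd
    simpa using this
  refine (hasDerivAt_integral_of_dominated_loc_of_deriv_le (𝕜 := ℂ) (μ := volume.restrict (Ioi (0:ℝ)))
    (F := fun (b : ℂ) (t : ℝ) => ((t ^ (-(3/2) : ℝ) * Real.exp (-a / t) : ℝ) : ℂ) * cexp (-b * t))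
    (F' := fun (b : ℂ) (t : ℝ) => ((t ^ (-(3/2) : ℝ) * Real.exp (-a / t) : ℝ) : ℂ) * (cexp (-b * t) * (-t)))
    (bound := fun t : ℝ => t ^ (-(1/2) : ℝ) * Real.exp (-(b.re/2) * t)) (Metric.ball_mem_nhds b hd) ?_ (Phi_integrable a ha b hb.le) (Phi_meas' a b) ?_ h0 ?_).2
  · filter_upwards with x using Phi_meas a x
  · filter_upwards [ae_restrict_mem measurableSet_Ioi] with t ht x hx
    have ht : 0 < t := ht
    have hx' : b.re / 2 ≤ x.re := by
      have h1 := (abs_re_le_norm (x - b))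
      rw [mem_ball_iff_norm] at hx
      have := abs_lt.1 (h1.trans_lt hx)
      simp at this
      linarith
    rw [norm_mul, norm_mul, Complex.norm_real, Real.norm_of_nonneg (by positivity), Complex.norm_exp, norm_neg, Complex.norm_real, Real.norm_of_nonneg ht.le]
    have e1 : t ^ (-(1/2) : ℝ) = t ^ (-(3/2) : ℝ) * t := by
      conv_rhs => rw [← Real.rpow_add_one ht.ne']
      norm_num
    have e2 : Real.exp (-a/t) ≤ 1 := by
      rw [Real.exp_le_one_iff]; rw [neg_div]; simp; positivity
    have e3 : Real.exp (-x * t).re ≤ Real.exp (-(b.re/2) * t) := by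
      rw [Real.exp_le_exp]; simp; nlinarith
    calc _ = (t ^ (-(3/2) : ℝ) * t) * (Real.exp (-a/t) * Real.exp (-x * t).re) := by ring
      _ ≤ (t ^ (-(3/2) : ℝ) * t) * (1 * Real.exp (-(b.re/2) * t)) := by gcongr
      _ = _ := by rw [e1]; ring
  · filter_upwards with t x hx
    have : HasDerivAt (fun x : ℂ => cexp (-x * t)) (cexp (-x * t) * (-1 * t)) x := by
      apply HasDerivAt.cexp
      apply HasDerivAt.mul_const
      exact hasDerivAt_neg x
    simpa using this.const_mul _

lemma J_eq (a b : ℝ) (ha : 0 < a) (hb : 0 < b) :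
    ∫ t in Ioi (0:ℝ), t ^ (-(1/2) : ℝ) * Real.exp (-a / t) * Real.exp (-b * t) = √(a / b) *
     ∫ t in Ioi (0:ℝ), t ^ (-(3/2) : ℝ) * Real.exp (-a / t) * Real.exp (-b * t) := by
  set c := a / b with hc
  have hc0 : 0 < c := by positivity
  set g : ℝ → ℝ := fun t => t ^ (-(1/2) : ℝ) * Real.exp (-a / t) * Real.exp (-b * t) with hg
  have h1 := integral_comp_mul_left_Ioi g 0 hc0
  have h2 := integral_comp_rpow_Ioi (fun t => g (c * t)) (by norm_num : (-1:ℝ) ≠ 0)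
  rw [mul_zero] at h1
  rw [h1] at h2
  have h3 : ∫ t in Ioi (0:ℝ), g t = c * ∫ x in Ioi (0:ℝ), (|(-1:ℝ)| * x ^ ((-1:ℝ) - 1)) • g (c * x ^ (-1:ℝ)) := by
    rw [h2]; simp; field_simp
  rw [h3, ← integral_const_mul, ← integral_const_mul]
  apply setIntegral_congr_fun measurableSet_Ioi
  intro t ht
  have ht : 0 < t := ht
  simp only [hg, abs_neg, abs_one, one_mul, smul_eq_mul]
  have e1 : -a / (c * t ^ (-1:ℝ)) = -b * t := by rw [Real.rpow_neg_one, hc]; field_simp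
  have e2 : -b * (c * t ^ (-1:ℝ)) = -a / t := by rw [Real.rpow_neg_one, hc]; field_simp
  rw [e1, e2, Real.mul_rpow hc0.le (by positivity), ← Real.rpow_mul ht.le]
  have e3 : √c = c * c ^ (-(1/2) : ℝ) := by
    rw [Real.sqrt_eq_rpow]
    conv_rhs => rw [mul_comm, ← Real.rpow_add_one hc0.ne']
    norm_num
  have e4 : t ^ (-(3/2) : ℝ) = t ^ ((-1:ℝ) - 1) * t ^ ((-1:ℝ) * (-(1/2))) := by
    rw [← Real.rpow_add ht]; norm_num
  rw [e3, e4]; ring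

noncomputable def PhiR (a b : ℝ) : ℝ :=
  ∫ t in Ioi (0:ℝ), t ^ (-(3/2) : ℝ) * Real.exp (-a / t) * Real.exp (-b * t)

lemma Phi_ofReal (a b : ℝ) : Phi a b = (PhiR a b : ℂ) := by
  rw [Phi, PhiR, ← integral_complex_ofReal]
  apply setIntegral_congr_fun measurableSet_Ioi
  intro t ht
  simp

lemma PhiR_deriv (a b : ℝ) (ha : 0 < a) (hb : 0 < b) :
    HasDerivAt (PhiR a) (-(√(a / b) * PhiR a b)) b := by
  have h := (Phi_deriv a ha b (by simpa using hb)).real_of_complex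
  have e : (fun x : ℝ => (Phi a x).re) = PhiR a := by
    ext x; rw [Phi_ofReal, ofReal_re]
  rw [e] at h
  convert h using 1
  rw [PhiR, ← J_eq a b ha hb, ← integral_neg]
  have : (∫ (t : ℝ) in Ioi (0:ℝ), ((t ^ (-(3/2) : ℝ) * Real.exp (-a / t) : ℝ) : ℂ) * (cexp (-b * t) * (-t)))
     = ((∫ t in Ioi (0:ℝ), -(t ^ (-(1/2) : ℝ) * Real.exp (-a / t) * Real.exp (-b * t)) : ℝ) : ℂ) := by
    rw [← integral_complex_ofReal]
    apply setIntegral_congr_fun measurableSet_Ioi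
    intro t ht
    have ht : 0 < t := ht
    have e1 : t ^ (-(1/2) : ℝ) = t ^ (-(3/2) : ℝ) * t := by
      conv_rhs => rw [← Real.rpow_add_one ht.ne']
      norm_num
    simp only [e1]
    push_cast
    ring
  rw [this, ofReal_re]

lemma PhiR_eq (a b : ℝ) (ha : 0 < a) (hb : 0 < b) :
    PhiR a b = √(π / a) * Real.exp (-2 * √a * √b) := by
  have hcont : ContinuousOn (fun b => PhiR a b * Real.exp (2 * √a * √b)) (Icc 0 b) := by
    have : ContinuousOn (PhiR a) (Icc 0 b) := by
      have e : PhiR a = fun x : ℝ => (Phi a x).re := by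
        ext x; rw [Phi_ofReal, ofReal_re]
      rw [e]
      apply Complex.continuous_re.comp_continuousOn
      apply (Phi_cont a ha).comp Complex.continuous_ofReal.continuousOn
      intro x hx
      simpa using hx.1
    apply this.mul
    fun_prop
  obtain ⟨c, hc, h⟩ := exists_hasDerivAt_eq_slope (fun b => PhiR a b * Real.exp (2 * √a * √b)) (fun _ => 0) hb hcont (by
    intro y hy
    have h1 := PhiR_deriv a y ha hy.1
    have h2 : HasDerivAt (fun b => Real.exp (2 * √a * √b)) (Real.exp (2 * √a * √y) * (2 * √a * (1 / (2 * √y)))) y :=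
      ((Real.hasDerivAt_sqrt hy.1.ne').const_mul _).exp
    refine (h1.mul h2).congr_deriv ?_
    rw [Real.sqrt_div ha.le]
    have : 0 < √y := Real.sqrt_pos.2 hy.1
    field_simp
    ring)
  have h0 : PhiR a 0 = √(π / a) := by
    rw [← (W_int a ha).2, PhiR]; simp
  have h' : (0:ℝ) = PhiR a b * Real.exp (2 * √a * √b) - PhiR a 0 * Real.exp (2 * √a * √0) := by
    have : b - 0 ≠ 0 := by simpa using hb.ne'
    field_simp at h
    simpa using h
  have : -2 * √a * √b = -(2 * √a * √b) := by ring
  rw [this, Real.exp_neg, ← div_eq_mul_inv, eq_div_iff (Real.exp_ne_zero _), ← h0]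
  simp at h'
  linarith

lemma Phi_eq_re_pos (a : ℝ) (ha : 0 < a) (b : ℂ) (hb : 0 < b.re) :
    Phi a b = √(π / a) * cexp (-2 * √a * b ^ (1/2 : ℂ)) := by
  have hopen : IsOpen {b : ℂ | 0 < b.re} := isOpen_lt continuous_const Complex.continuous_re
  have hA : AnalyticOnNhd ℂ (Phi a) {b : ℂ | 0 < b.re} := by
    apply DifferentiableOn.analyticOnNhd _ hopen
    intro b hb
    exact (Phi_deriv a ha b hb).differentiableAt.differentiableWithinAt
  have hB : AnalyticOnNhd ℂ (fun b : ℂ => √(π / a) * cexp (-2 * √a * b ^ (1/2 : ℂ))) {b : ℂ | 0 < b.re} := by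
    apply DifferentiableOn.analyticOnNhd _ hopen
    intro b hb
    apply DifferentiableAt.differentiableWithinAt
    have : b ∈ slitPlane := Or.inl hb
    have : DifferentiableAt ℂ (fun b : ℂ => b ^ (1/2 : ℂ)) b := by
      apply DifferentiableAt.cpow differentiableAt_id (differentiableAt_const _) this
    fun_prop
  have hconn : IsPreconnected {b : ℂ | 0 < b.re} := (convex_halfSpace_re_gt 0).isPreconnected
  refine hA.eqOn_of_preconnected_of_frequently_eq hB hconn (z₀ := 1) (by simp) ?_ hb
  have hreal : ∀ x : ℝ, 0 < x → Phi a x = √(π / a) * cexp (-2 * √a * (x:ℂ) ^ (1/2 : ℂ)) := by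
    intro x hx
    rw [Phi_ofReal, PhiR_eq a x ha hx, Real.sqrt_eq_rpow x]
    push_cast
    rw [Complex.ofReal_cpow hx.le]
    norm_num
  have ht : Tendsto (fun x : ℝ => (x : ℂ)) (𝓝[≠] 1) (𝓝[≠] (1:ℂ)) := by
    apply tendsto_nhdsWithin_of_tendsto_nhds_of_eventually_within
    · have : Tendsto (fun x : ℝ => (x : ℂ)) (𝓝 1) (𝓝 ((1:ℝ):ℂ)) := Complex.continuous_ofReal.tendsto 1
      simpa using this.mono_left nhdsWithin_le_nhds
    · filter_upwards [self_mem_nhdsWithin] with x hx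
      simpa using hx
  apply ht.frequently
  apply Eventually.frequently
  filter_upwards [nhdsWithin_le_nhds (Ioi_mem_nhds (zero_lt_one : (0:ℝ) < 1))] with x hx
  exact hreal x hx

lemma Phi_eq (a : ℝ) (ha : 0 < a) (b : ℂ) (hb : 0 ≤ b.re) (hb0 : b ∈ slitPlane) :
    Phi a b = √(π / a) * cexp (-2 * √a * b ^ (1/2 : ℂ)) := by
  have h1 : Tendsto (fun e : ℝ => b + e) (𝓝[>] 0) (𝓝 b) := by
    have : Tendsto (fun e : ℝ => b + e) (𝓝 0) (𝓝 (b + (0:ℝ))) := by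
      apply Continuous.tendsto; fun_prop
    simpa using this.mono_left nhdsWithin_le_nhds
  have h2 : Tendsto (fun e : ℝ => Phi a (b + e)) (𝓝[>] 0) (𝓝 (Phi a b)) := by
    apply ((Phi_cont a ha) b hb).tendsto.comp
    apply tendsto_nhdsWithin_of_tendsto_nhds_of_eventually_within _ h1
    filter_upwards [self_mem_nhdsWithin] with e he
    have : 0 < e := he
    simp; positivity
  have h3 : Tendsto (fun e : ℝ => √(π / a) * cexp (-2 * √a * (b + e) ^ (1/2 : ℂ))) (𝓝[>] 0) (𝓝 (√(π / a) * cexp (-2 * √a * b ^ (1/2 : ℂ)))) := by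
    have : ContinuousAt (fun b : ℂ => √(π / a) * cexp (-2 * √a * b ^ (1/2 : ℂ))) b := by
      have : ContinuousAt (fun b : ℂ => b ^ (1/2 : ℂ)) b := continuousAt_cpow_const hb0
      fun_prop
    exact this.tendsto.comp h1
  refine tendsto_nhds_unique h2 (h3.congr' ?_)
  filter_upwards [self_mem_nhdsWithin] with e he
  have : 0 < e := he
  rw [Phi_eq_re_pos a ha]
  simp; positivity

end L1
section L2
open MeasureTheory Set Filter Topology FourierTransform

lemma summable_exp_sqrt (c : ℝ) (hc : 0 < c) : Summable (fun n : ℕ => Real.exp (-(c * √((n:ℝ) + 1)))) := by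
  have h4 : Summable (fun n : ℕ => (24 / c ^ 4) * (1 / ((n + 1 : ℕ) : ℝ) ^ 2)) :=
    ((summable_nat_add_iff 1).2 (Real.summable_one_div_nat_pow.2 one_lt_two)).mul_left _
  refine Summable.of_nonneg_of_le (fun n => (Real.exp_pos _).le) (fun n => ?_) h4
  set y := √((n:ℝ) + 1) with hy
  have hy0 : 0 < y := Real.sqrt_pos.2 (by positivity)
  have hy2 : ((n + 1 : ℕ) : ℝ) = y ^ 2 := by rw [hy, Real.sq_sqrt (by positivity)]; push_cast; ring
  have h := Real.pow_div_factorial_le_exp (c * y) (by positivity) 4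
  norm_num [Nat.factorial] at h
  rw [hy2, Real.exp_neg, inv_le_comm₀ (Real.exp_pos _) (by positivity)]
  calc _ = (c * y) ^ 4 / 24 := by field_simp
    _ ≤ _ := h

lemma my_hasSum_congr {α β : Type*} [AddCommMonoid α] [TopologicalSpace α] {f g : β → α} {a : α}
    (h : ∀ b, f b = g b) : HasSum f a ↔ HasSum g a := by
  rw [funext h]

noncomputable def uu (a : ℝ) (n : ℕ) : ℝ := 2 * √(π * a * (n + 1))

noncomputable def fP (a : ℝ) (t : ℝ) : ℂ := if 0 < t then ((t ^ (-(3/2) : ℝ) * Real.exp (-a / t) : ℝ) : ℂ) else 0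

lemma fP_cont (a : ℝ) (ha : 0 < a) : Continuous (fP a) := by
  rw [continuous_iff_continuousAt]
  intro t
  rcases lt_trichotomy t 0 with h | h | h
  · have : fP a =ᶠ[𝓝 t] fun _ => 0 := by
      filter_upwards [Iio_mem_nhds h] with s hs
      have : s < 0 := hs
      simp [fP, this.le]
    exact continuousAt_const.congr this.symm
  · subst h
    have h0 : Tendsto (fun t : ℝ => ((t ^ (-(3/2) : ℝ) * Real.exp (-a / t) : ℝ) : ℂ)) (𝓝[>] 0) (𝓝 0) := by
      have h1 := (tendsto_rpow_mul_exp_neg_mul_atTop_nhds_zero (3/2) a ha).comp tendsto_inv_nhdsGT_zero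
      have h2 := (Complex.continuous_ofReal.tendsto 0).comp h1
      simp only [Complex.ofReal_zero] at h2
      refine h2.congr' ?_
      filter_upwards [self_mem_nhdsWithin] with t ht
      have ht : 0 < t := ht
      simp only [Function.comp]
      rw [Real.inv_rpow ht.le, ← Real.rpow_neg ht.le, div_eq_mul_inv (-a) t]
    have e0 : fP a 0 = 0 := by simp [fP]
    rw [continuousAt_iff_continuous_left'_right']
    constructor
    · rw [ContinuousWithinAt, e0]
      refine tendsto_const_nhds.congr' ?_
      filter_upwards [self_mem_nhdsWithin] with s hs
      have : s < 0 := hs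
      simp [fP, this.le]
    · rw [ContinuousWithinAt, e0]
      refine h0.congr' ?_
      filter_upwards [self_mem_nhdsWithin] with s hs
      have : 0 < s := hs
      simp [fP, this]
  · have : fP a =ᶠ[𝓝 t] fun t => ((t ^ (-(3/2) : ℝ) * Real.exp (-a / t) : ℝ) : ℂ) := by
      filter_upwards [Ioi_mem_nhds h] with s hs
      have : 0 < s := hs
      simp [fP, this]
    refine ContinuousAt.congr ?_ this.symm
    apply Complex.continuous_ofReal.continuousAt.comp
    apply ContinuousAt.mul
    · exact Real.continuousAt_rpow_const _ _ (Or.inl h.ne')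
    · apply Real.continuous_exp.continuousAt.comp
      exact continuousAt_const.div continuousAt_id h.ne'

lemma fP_decay (a : ℝ) (ha : 0 < a) : fP a =O[cocompact ℝ] (|·| ^ (-(3/2) : ℝ)) := by
  apply Asymptotics.IsBigO.of_bound 1
  filter_upwards with t
  rw [fP]
  split_ifs with h
  · rw [Complex.norm_real, norm_mul, abs_of_pos h, one_mul, Real.norm_of_nonneg (Real.exp_pos _).le]
    apply mul_le_of_le_one_right (by positivity)
    rw [Real.exp_le_one_iff, neg_div]
    simp; positivity
  · simp <;> positivity

lemma fP_fourier (a : ℝ) (n : ℝ) : 𝓕 (fP a) n = Phi a (2 * π * n * I) := by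
  rw [Real.fourier_eq', Phi, ← integral_indicator measurableSet_Ioi]
  congr 1
  ext t
  by_cases h : 0 < t
  · rw [indicator_of_mem (by exact h), fP, if_pos h]
    simp only [smul_eq_mul]
    rw [mul_comm]
    congr 2
    simp
    try ring
  · rw [indicator_of_notMem (by exact h), fP, if_neg h]
    simp

lemma sqrt_pos_case (a : ℝ) (ha : 0 < a) (n : ℕ) :
    Phi a (2 * π * ((n:ℝ)+1 : ℝ) * I) = √(π / a) * cexp (-(uu a n) * (1 + I)) := by
  have hn : (0:ℝ) < (n:ℝ) + 1 := by positivity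
  set r := √(π * ((n:ℝ)+1)) with hr
  have hr0 : 0 < r := Real.sqrt_pos.2 (by positivity)
  have e : (2 * π * ((n:ℝ)+1 : ℝ) * I : ℂ) = (r * (1 + I)) ^ 2 := by
    have : (r:ℂ)^2 = π * ((n:ℝ)+1 : ℝ) := by
      rw [hr]; norm_cast; rw [Real.sq_sqrt (by positivity)]
    rw [mul_pow, this]
    ring_nf
    rw [I_sq]; ring
  rw [Phi_eq a ha]
  · rw [e, one_div, Complex.sq_cpow_two_inv (by simpa using hr0)]
    congr 2
    have : uu a n = 2 * √a * r := by
      rw [uu, hr, mul_assoc 2, ← Real.sqrt_mul ha.le]; congr 2; ring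
    rw [this]; push_cast; ring
  · simp
  · right
    simp
    exact_mod_cast hn.ne'

lemma sqrt_neg_case (a : ℝ) (ha : 0 < a) (n : ℕ) :
    Phi a (2 * π * (-((n:ℝ)+1) : ℝ) * I) = √(π / a) * cexp (-(uu a n) * (1 - I)) := by
  have hn : (0:ℝ) < (n:ℝ) + 1 := by positivity
  set r := √(π * ((n:ℝ)+1)) with hr
  have hr0 : 0 < r := Real.sqrt_pos.2 (by positivity)
  have e : (2 * π * (-((n:ℝ)+1) : ℝ) * I : ℂ) = (r * (1 - I)) ^ 2 := by
    have : (r:ℂ)^2 = π * ((n:ℝ)+1 : ℝ) := by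
      rw [hr]; norm_cast; rw [Real.sq_sqrt (by positivity)]
    rw [mul_pow, this]
    push_cast
    ring_nf
    rw [I_sq]; ring
  rw [Phi_eq a ha]
  · rw [e, one_div, Complex.sq_cpow_two_inv (by simpa using hr0)]
    congr 2
    have : uu a n = 2 * √a * r := by
      rw [uu, hr, mul_assoc 2, ← Real.sqrt_mul ha.le]; congr 2; ring
    rw [this]; push_cast; ring
  · simp
  · right
    simp
    intro h
    linarith

lemma uu_eq (a : ℝ) (ha : 0 < a) (n : ℕ) : uu a n = (2 * √(π * a)) * √((n:ℝ)+1) := by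
  rw [uu, mul_assoc 2, ← Real.sqrt_mul (by positivity)]

lemma summable_exp_uu (a : ℝ) (ha : 0 < a) : Summable (fun n : ℕ => Real.exp (-(uu a n))) := by
  have : 0 < 2 * √(π * a) := by have := Real.sqrt_pos.2 (by positivity : 0 < π * a); positivity
  simp_rw [uu_eq a ha]
  exact summable_exp_sqrt _ this

lemma PhiA (a : ℝ) (ha : 0 < a) : ∑' k : ℕ, ((k:ℝ)+1) ^ (-(3/2) : ℝ) * Real.exp (-a / ((k:ℝ)+1)) =
    √(π / a) * (1 + 2 * ∑' n : ℕ, Real.exp (-(uu a n)) * Real.cos (uu a n)) := by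
  have hnorm : ∀ (n : ℕ) (s : ℂ), s.re = 1 → ‖√(π / a) * cexp (-(uu a n) * s)‖ = √(π / a) * Real.exp (-(uu a n)) := by
    intro n s hs
    rw [norm_mul, Complex.norm_real, Real.norm_of_nonneg (by positivity), Complex.norm_exp]
    simp [hs]
  have s1 : Summable (fun n : ℕ => √(π / a) * cexp (-(uu a n) * (1 + I))) := by
    apply Summable.of_norm
    simp_rw [hnorm _ (1 + I) (by simp)]
    exact (summable_exp_uu a ha).mul_left _
  have s2 : Summable (fun n : ℕ => √(π / a) * cexp (-(uu a n) * (1 - I))) := by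
    apply Summable.of_norm
    simp_rw [hnorm _ (1 - I) (by simp)]
    exact (summable_exp_uu a ha).mul_left _
  have c0 : Phi a 0 = √(π / a) := by
    have := Phi_ofReal a 0
    simp only [ofReal_zero] at this
    rw [this, ← (W_int a ha).2, PhiR]; simp
  have hF : ∀ m : ℤ, 𝓕 (fP a) m = Phi a (2 * π * (m:ℝ) * I) := fun m => fP_fourier a m
  have hasumF : HasSum (fun m : ℤ => 𝓕 (fP a) m) ((√(π / a) : ℂ) + ∑' n : ℕ, √(π / a) * cexp (-(uu a n) * (1 + I)) +
      ∑' n : ℕ, √(π / a) * cexp (-(uu a n) * (1 - I))) := by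
    apply HasSum.of_nat_of_neg_add_one
    · rw [← hasSum_nat_add_iff' 1]
      simp only [Finset.range_one, Finset.sum_singleton, hF]
      have : Phi a (2 * π * (((0:ℕ):ℤ):ℝ) * I) = √(π / a) := by simpa using c0
      rw [this, add_sub_cancel_left]
      refine (my_hasSum_congr fun n => ?_).2 s1.hasSum
      rw [← sqrt_pos_case a ha n]
      congr 1; push_cast; ring
    · refine (my_hasSum_congr fun n => ?_).2 s2.hasSum
      rw [← sqrt_neg_case a ha n, hF]
      congr 1; push_cast; ring
  have hP := Real.tsum_eq_tsum_fourier_of_rpow_decay_of_summable (fP_cont a ha) (by norm_num : (1:ℝ) < 3/2) (fP_decay a ha) hasumF.summable 0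
  simp only [QuotientAddGroup.mk_zero, fourier_eval_zero, mul_one, hasumF.tsum_eq, zero_add] at hP
  have hsumL : HasSum (fun n : ℤ => fP a n) (((∑' k : ℕ, ((k:ℝ)+1) ^ (-(3/2) : ℝ) * Real.exp (-a / ((k:ℝ)+1)) : ℝ) : ℂ) + 0) := by
    have hs : Summable (fun k : ℕ => ((k:ℝ)+1) ^ (-(3/2) : ℝ) * Real.exp (-a / ((k:ℝ)+1))) := by
      have h1 : Summable (fun k : ℕ => ((k+1 : ℕ):ℝ) ^ (-(3/2) : ℝ)) :=
        (summable_nat_add_iff 1).2 (Real.summable_nat_rpow.2 (by norm_num))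
      refine Summable.of_nonneg_of_le (fun k => by positivity) (fun k => ?_) h1
      push_cast
      apply mul_le_of_le_one_right (by positivity)
      rw [Real.exp_le_one_iff, neg_div]
      simp; positivity
    apply HasSum.of_nat_of_neg_add_one
    · rw [← hasSum_nat_add_iff' 1]
      simp only [Finset.range_one, Finset.sum_singleton]
      have h0 : fP a ((0:ℕ):ℤ) = 0 := by simp [fP]
      rw [h0, sub_zero]
      have := Complex.hasSum_ofReal.2 hs.hasSum
      refine (my_hasSum_congr fun k => ?_).2 this
      rw [fP, if_pos (by push_cast; positivity)]
      push_cast; rfl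
    · refine (my_hasSum_congr fun n => ?_).2 hasSum_zero
      rw [fP, if_neg]
      push_cast
      have : (0:ℝ) ≤ n := by positivity
      linarith
  rw [hsumL.tsum_eq, add_zero, add_assoc, ← s1.tsum_add s2] at hP
  apply Complex.ofReal_injective
  rw [hP, mul_add, mul_one, ← tsum_mul_left, ← tsum_mul_left, Complex.ofReal_add, Complex.ofReal_tsum]
  congr 2
  ext n
  push_cast
  rw [← mul_add]
  have : ∀ z : ℂ, cexp (-z * (1 + I)) + cexp (-z * (1 - I)) = 2 * (cexp (-z) * Complex.cos z) := by
    intro z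
    rw [Complex.cos]
    have e1 : -z * (1 + I) = -z + -z * I := by ring
    have e2 : -z * (1 - I) = -z + z * I := by ring
    rw [e1, e2, Complex.exp_add, Complex.exp_add]; ring
  rw [this]

end L2
section L3
open MeasureTheory Set Filter Topology

lemma cpow_deriv (r : ℂ) {n v : ℝ} (h : 0 < n + v) :
    HasDerivAt (fun v : ℝ => ((n + v : ℝ) : ℂ) ^ r) (r * ((n + v : ℝ) : ℂ) ^ (r - 1)) v := by
  have h1 : HasDerivAt (fun z : ℂ => ((n:ℂ) + z) ^ r) (r * ((n:ℂ) + v) ^ (r - 1) * 1) (v : ℂ) := by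
    apply HasDerivAt.cpow_const
    · exact (hasDerivAt_id (v:ℂ)).const_add _
    · left; simpa using h
  have := h1.comp_ofReal
  simpa using this

noncomputable def VV (s : ℂ) (n : ℝ) : ℂ :=
  (s - 1) * ((n:ℂ) ^ (-s) + ((n + 1 : ℝ) : ℂ) ^ (-s)) / 2 + (((n + 1 : ℝ) : ℂ) ^ (1 - s) - (n : ℂ) ^ (1 - s))

lemma VV_bound (s : ℂ) (hs : ‖s - 1‖ < 7/4) (n : ℝ) (hn : 1 ≤ n) : ‖VV s n‖ ≤ 12 * n ^ (-(5/4) : ℝ) := by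
  have hre : -(3/4) < s.re := by
    have h1 := (abs_re_le_norm (s - 1))
    have := abs_lt.1 (h1.trans_lt hs)
    simp at this
    linarith
  have hn0 : 0 < n := by linarith
  set H : ℝ → ℂ := fun v => (s - 1) * (v * ((n:ℂ) ^ (-s) + ((n + v : ℝ) : ℂ) ^ (-s))) / 2 + (((n + v : ℝ) : ℂ) ^ (1 - s) - (n : ℂ) ^ (1 - s)) with hH
  set H' : ℝ → ℂ := fun v => (s - 1) / 2 * ((n:ℂ) ^ (-s) - ((n + v : ℝ) : ℂ) ^ (-s) - s * (v * ((n + v : ℝ) : ℂ) ^ (-s - 1))) with hH'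
  set H'' : ℝ → ℂ := fun v => (s - 1) / 2 * (s * (s + 1) * v * ((n + v : ℝ) : ℂ) ^ (-s - 1 - 1)) with hH''
  have hid : ∀ v : ℝ, HasDerivAt (fun v : ℝ => (v : ℂ)) 1 v := fun v => by
    simpa using (hasDerivAt_id (v:ℂ)).comp_ofReal
  have hd1 : ∀ v ∈ Icc (0:ℝ) 1, HasDerivAt H (H' v) v := by
    intro v hv
    have hp : 0 < n + v := by linarith [hv.1]
    have a1 := cpow_deriv (-s) hp
    have a2 := cpow_deriv (1 - s) hp
    have := ((((hid v).mul (a1.const_add ((n:ℂ) ^ (-s)))).const_mul (s - 1)).div_const 2).add (a2.sub_const ((n : ℂ) ^ (1 - s)))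
    refine this.congr_deriv ?_
    have e : (1 - s - 1 : ℂ) = -s := by ring
    rw [hH', e]
    ring
  have hd2 : ∀ v ∈ Icc (0:ℝ) 1, HasDerivAt H' (H'' v) v := by
    intro v hv
    have hp : 0 < n + v := by linarith [hv.1]
    have a1 := cpow_deriv (-s) hp
    have a2 := cpow_deriv (-s - 1) hp
    have := (((a1.const_sub ((n:ℂ) ^ (-s)))).sub (((hid v).mul a2).const_mul s)).const_mul ((s - 1) / 2)
    refine this.congr_deriv ?_
    rw [hH'']
    ring
  set M := 12 * n ^ (-(5/4) : ℝ) with hM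
  have hM0 : 0 ≤ M := by positivity
  have hb2 : ∀ v ∈ Ico (0:ℝ) 1, ‖H'' v‖ ≤ M := by
    intro v hv
    have hp : 0 < n + v := by linarith [hv.1]
    rw [hH'']
    simp only [norm_mul, norm_div]
    rw [Complex.norm_cpow_eq_rpow_re_of_pos hp, Complex.norm_real, Real.norm_of_nonneg hv.1]
    have b1 : ‖s‖ ≤ 3 := by
      calc ‖s‖ = ‖(s - 1) + 1‖ := by ring_nf
        _ ≤ ‖s - 1‖ + ‖(1:ℂ)‖ := norm_add_le _ _
        _ ≤ 3 := by simp; linarith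
    have b2 : ‖s + 1‖ ≤ 4 := by
      calc ‖s + 1‖ ≤ ‖s‖ + ‖(1:ℂ)‖ := norm_add_le _ _
        _ ≤ 4 := by simp; linarith
    have b3 : (n + v) ^ (-s - 1 - 1).re ≤ n ^ (-(5/4) : ℝ) := by
      calc (n + v) ^ (-s - 1 - 1).re ≤ (n + v) ^ (-(5/4) : ℝ) := by
            apply Real.rpow_le_rpow_of_exponent_le
            · linarith [hv.1]
            · simp; linarith
        _ ≤ _ := Real.rpow_le_rpow_of_nonpos hn0 (by linarith [hv.1]) (by norm_num)
    have b4 : ‖s - 1‖ / ‖(2:ℂ)‖ ≤ 1 := by simp; linarith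
    have hv0 : 0 ≤ v := hv.1
    have hv1 : v ≤ 1 := hv.2.le
    calc _ ≤ 1 * (3 * 4 * 1 * n ^ (-(5/4) : ℝ)) := by gcongr
      _ = M := by rw [hM]; ring
  have h0' : H' 0 = 0 := by simp [hH']
  have h0 : H 0 = 0 := by simp [hH]
  have hb1 : ∀ v ∈ Ico (0:ℝ) 1, ‖H' v‖ ≤ M := by
    intro v hv
    have := norm_image_sub_le_of_norm_deriv_le_segment' (fun x hx => (hd2 x hx).hasDerivWithinAt) hb2 v ⟨hv.1, hv.2.le⟩
    rw [h0', sub_zero, sub_zero] at this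
    nlinarith [hv.2]
  have := norm_image_sub_le_of_norm_deriv_le_segment_01' (fun x hx => (hd1 x hx).hasDerivWithinAt) hb1
  rw [h0, sub_zero] at this
  simpa [hH, VV] using this

lemma VV_summable_bound : Summable (fun k : ℕ => 12 * ((k:ℝ)+1) ^ (-(5/4) : ℝ)) := by
  have h1 : Summable (fun k : ℕ => ((k+1 : ℕ):ℝ) ^ (-(5/4) : ℝ)) :=
        (summable_nat_add_iff 1).2 (Real.summable_nat_rpow.2 (by norm_num))
  push_cast at h1
  exact h1.mul_left _

lemma VV_summable (s : ℂ) (hs : ‖s - 1‖ < 7/4) : Summable (fun k : ℕ => VV s ((k:ℝ)+1)) := by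
  apply Summable.of_norm_bounded VV_summable_bound
  intro k
  apply VV_bound s hs
  have : (0:ℝ) ≤ k := by positivity
  linarith

lemma zeta1_eq (s : ℂ) (hs : ‖s - 1‖ < 7/4) :
    riemannZeta₁ s = (s - 1) / 2 + 1 + ∑' k : ℕ, VV s ((k:ℝ)+1) := by
  have hk : ∀ k : ℕ, (1:ℝ) ≤ (k:ℝ) + 1 := fun k => by
    have : (0:ℝ) ≤ k := by positivity
    linarith
  have hA : AnalyticOnNhd ℂ riemannZeta₁ (Metric.ball 1 (7/4)) :=
    differentiable_riemannZeta₁.differentiableOn.analyticOnNhd Metric.isOpen_ball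
  have hB : AnalyticOnNhd ℂ (fun s => (s - 1) / 2 + 1 + ∑' k : ℕ, VV s ((k:ℝ)+1)) (Metric.ball 1 (7/4)) := by
    apply DifferentiableOn.analyticOnNhd _ Metric.isOpen_ball
    apply DifferentiableOn.add (by fun_prop)
    apply Complex.differentiableOn_tsum_of_summable_norm VV_summable_bound _ Metric.isOpen_ball
    · intro k s hs
      rw [mem_ball_iff_norm] at hs
      exact VV_bound s hs _ (hk k)
    · intro k
      have h1 : (((k:ℝ) + 1 : ℝ) : ℂ) ≠ 0 := by
        have := hk k
        exact_mod_cast (by linarith : (k:ℝ) + 1 ≠ 0)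
      have h2 : (((k:ℝ) + 1 + 1 : ℝ) : ℂ) ≠ 0 := by
        have := hk k
        exact_mod_cast (by linarith : (k:ℝ) + 1 + 1 ≠ 0)
      have c : ∀ (c : ℂ), c ≠ 0 → Differentiable ℂ (fun s : ℂ => c ^ (-s)) := fun c hc => by
        intro s; exact DifferentiableAt.const_cpow (by fun_prop) (Or.inl hc)
      have c' : ∀ (c : ℂ), c ≠ 0 → Differentiable ℂ (fun s : ℂ => c ^ (1-s)) := fun c hc => by
        intro s; exact DifferentiableAt.const_cpow (by fun_prop) (Or.inl hc)
      have := c _ h1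
      have := c _ h2
      have := c' _ h1
      have := c' _ h2
      unfold VV
      apply Differentiable.differentiableOn
      fun_prop
  have hconn : IsPreconnected (Metric.ball (1:ℂ) (7/4)) := (convex_ball _ _).isPreconnected
  have h32 : ((3/2 : ℂ)) ∈ Metric.ball (1:ℂ) (7/4) := by
    rw [mem_ball_iff_norm]; norm_num
  refine hA.eqOn_of_preconnected_of_frequently_eq hB hconn h32 ?_ (by rwa [mem_ball_iff_norm])
  apply Eventually.frequently
  have hopen : IsOpen {b : ℂ | 1 < b.re} := isOpen_lt continuous_const Complex.continuous_re
  filter_upwards [nhdsWithin_le_nhds (hopen.mem_nhds (by norm_num : (3/2 : ℂ) ∈ {b : ℂ | 1 < b.re})),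
    nhdsWithin_le_nhds (Metric.isOpen_ball.mem_nhds h32)] with s hs1 hs2
  have hs1 : 1 < s.re := hs1
  rw [mem_ball_iff_norm] at hs2
  have hsne : s ≠ 1 := by rintro rfl; simp at hs1
  have hz : riemannZeta₁ s = (s - 1) * riemannZeta s := by
    rw [riemannZeta_eq_inv_sub_mul hsne, mul_inv_cancel_left₀ (sub_ne_zero.2 hsne)]
  have hsum : Summable (fun k : ℕ => 1 / ((k:ℂ) + 1) ^ s) := by
    have := (summable_nat_add_iff 1).2 (Complex.summable_one_div_nat_cpow.2 hs1)
    simpa using this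
  have hS0 : HasSum (fun k : ℕ => (((k:ℝ) + 1 : ℝ) : ℂ) ^ (-s)) (riemannZeta s) := by
    rw [zeta_eq_tsum_one_div_nat_add_one_cpow hs1]
    refine (my_hasSum_congr fun k => ?_).2 hsum.hasSum
    push_cast
    rw [Complex.cpow_neg, one_div]
  have hS1 : HasSum (fun k : ℕ => (((k:ℝ) + 1 + 1 : ℝ) : ℂ) ^ (-s)) (riemannZeta s - 1) := by
    have := (hasSum_nat_add_iff' 1).2 hS0
    simpa using this
  have hT := ((VV_summable s hs2).hasSum.tendsto_sum_nat)
  have hT2 : Tendsto (fun N : ℕ => ∑ k ∈ Finset.range N, VV s ((k:ℝ)+1)) atTop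
      (𝓝 ((s - 1) * (riemannZeta s + (riemannZeta s - 1)) / 2 + (0 - 1))) := by
    have e : ∀ N : ℕ, ∑ k ∈ Finset.range N, VV s ((k:ℝ)+1) =
       (s - 1) * (∑ k ∈ Finset.range N, (((k:ℝ) + 1 : ℝ) : ℂ) ^ (-s) + ∑ k ∈ Finset.range N, (((k:ℝ) + 1 + 1 : ℝ) : ℂ) ^ (-s)) / 2
        + ((((N:ℝ) + 1 : ℝ) : ℂ) ^ (1 - s) - 1) := by
      intro N
      have := Finset.sum_range_sub (fun k : ℕ => (((k:ℝ) + 1 : ℝ) : ℂ) ^ (1 - s)) N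
      simp only [Nat.cast_zero, zero_add, ofReal_one, one_cpow] at this
      rw [← this, ← Finset.sum_add_distrib, Finset.mul_sum, Finset.sum_div, ← Finset.sum_add_distrib]
      apply Finset.sum_congr rfl
      intro k _
      simp only [VV, Nat.cast_add, Nat.cast_one]
    simp_rw [e]
    apply Tendsto.add
    · apply Tendsto.div_const
      apply Tendsto.const_mul
      exact hS0.tendsto_sum_nat.add hS1.tendsto_sum_nat
    · apply Tendsto.sub_const
      rw [tendsto_zero_iff_norm_tendsto_zero]
      have : Tendsto (fun N : ℕ => ((N:ℝ) + 1) ^ (-(s.re - 1))) atTop (𝓝 0) :=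
        (tendsto_rpow_neg_atTop (by linarith : 0 < s.re - 1)).comp (tendsto_atTop_add_const_right _ _ tendsto_natCast_atTop_atTop)
      refine this.congr fun N => ?_
      rw [Complex.norm_cpow_eq_rpow_re_of_pos (by positivity)]
      simp
  rw [tendsto_nhds_unique hT hT2, hz]
  ring

lemma zeta_half : ∃ z : ℝ, riemannZeta (1/2) = z ∧
    Tendsto (fun N : ℕ => ∑ k ∈ Finset.range N, 1 / √((k:ℝ)+1) - 2 * √(N:ℝ)) atTop (𝓝 z) := by
  have hs : ‖((1/2:ℂ)) - 1‖ < 7/4 := by norm_num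
  have hT := ((VV_summable _ hs).hasSum.tendsto_sum_nat)
  have h1 := zeta1_eq _ hs
  have h2 := riemannZeta_eq_inv_sub_mul (s := 1/2) (by norm_num)
  have hz : (∑' k : ℕ, VV (1/2) ((k:ℝ)+1)) = -(1/2) * riemannZeta (1/2) + 1/4 - 1 := by
    rw [h2, h1]; norm_num; ring
  rw [hz] at hT
  have cp : ∀ n : ℝ, 0 < n → VV (1/2) n = ((-(1/4) * (1 / √n + 1 / √(n+1)) + (√(n+1) - √n) : ℝ) : ℂ) := by
    intro n hn
    have e : (-(1/2) : ℂ) = ((-(1/2) : ℝ) : ℂ) := by push_cast; rfl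
    have e' : (1 - 1/2 : ℂ) = ((1/2 : ℝ) : ℂ) := by push_cast; norm_num
    rw [VV, e, e', ← Complex.ofReal_cpow hn.le, ← Complex.ofReal_cpow (by linarith), ← Complex.ofReal_cpow hn.le, ← Complex.ofReal_cpow (by linarith),
      Real.rpow_neg hn.le, Real.rpow_neg (by linarith), ← Real.sqrt_eq_rpow, ← Real.sqrt_eq_rpow]
    push_cast
    ring
  set p : ℕ → ℝ := fun N => ∑ k ∈ Finset.range N, 1 / √((k:ℝ)+1) with hp
  have e : ∀ N : ℕ, ∑ k ∈ Finset.range N, VV (1/2) ((k:ℝ)+1) = ((-(1/4) * (p N + (p N + 1 / √((N:ℝ)+1) - 1)) + (√((N:ℝ)+1) - 1) : ℝ) : ℂ) := by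
    intro N
    induction N with
    | zero => simp [hp]
    | succ N ih =>
      rw [Finset.sum_range_succ, ih, cp _ (by positivity)]
      simp only [hp, Finset.sum_range_succ]
      push_cast
      ring
  simp_rw [e] at hT
  have hreal := (Complex.continuous_re.tendsto _).comp hT
  simp only [Function.comp_def, ofReal_re] at hreal
  have hz2 : riemannZeta (1/2) = ((riemannZeta (1/2)).re : ℂ) := by
    have h3 := (Complex.continuous_ofReal.tendsto _).comp hreal
    have h4 := tendsto_nhds_unique hT h3
    have h5 := congrArg Complex.im h4
    simp at h5
    apply Complex.ext
    · simp
    · simpa using h5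
  refine ⟨_, hz2, ?_⟩
  have hinv : Tendsto (fun N : ℕ => 1 / √((N:ℝ)+1)) atTop (𝓝 0) := by
    have : Tendsto (fun N : ℕ => √((N:ℝ)+1)) atTop atTop :=
      Real.tendsto_sqrt_atTop.comp (tendsto_atTop_add_const_right _ _ tendsto_natCast_atTop_atTop)
    exact tendsto_const_nhds.div_atTop this
  have hfin : Tendsto (fun N : ℕ => p N - 2 * √((N:ℝ)+1)) atTop (𝓝 (riemannZeta (1/2)).re) := by
    have := ((hreal.const_mul (-2)).sub ((hinv.const_mul (1/2)))).sub_const (3/2)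
    refine (this.congr fun N => ?_).trans (le_of_eq ?_)
    · ring
    · congr 1
      simp; ring
  have hsh : Tendsto (fun N : ℕ => p (N+1) - 2 * √((N+1 : ℕ):ℝ)) atTop (𝓝 (riemannZeta (1/2)).re) := by
    have := hfin.add hinv
    rw [add_zero] at this
    refine this.congr fun N => ?_
    simp only [hp, Finset.sum_range_succ]
    push_cast; ring
  exact (tendsto_add_atTop_iff_nat 1).1 hsh

lemma zeta_neg_half : ∃ w : ℝ, riemannZeta (-1/2) = w ∧
    Tendsto (fun N : ℕ => ∑ k ∈ Finset.range N, √((k:ℝ)+1) - 2 / 3 * (N * √(N:ℝ)) - 1 / 2 * √(N:ℝ)) atTop (𝓝 w) := by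
  have hs : ‖((-1/2:ℂ)) - 1‖ < 7/4 := by norm_num
  have hT := ((VV_summable _ hs).hasSum.tendsto_sum_nat)
  have h1 := zeta1_eq _ hs
  have h2 := riemannZeta_eq_inv_sub_mul (s := -1/2) (by norm_num)
  have hz : (∑' k : ℕ, VV (-1/2) ((k:ℝ)+1)) = -(3/2) * riemannZeta (-1/2) + 3/4 - 1 := by
    rw [h2, h1]; norm_num; ring
  rw [hz] at hT
  have cp : ∀ n : ℝ, 0 < n → VV (-1/2) n = ((-(3/4) * (√n + √(n+1)) + ((n+1) * √(n+1) - n * √n) : ℝ) : ℂ) := by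
    intro n hn
    have e : (-(-1/2) : ℂ) = ((1/2 : ℝ) : ℂ) := by push_cast; norm_num
    have e' : (1 - -1/2 : ℂ) = ((1 + 1/2 : ℝ) : ℂ) := by push_cast; norm_num
    rw [VV, e, e', ← Complex.ofReal_cpow hn.le, ← Complex.ofReal_cpow (by linarith), ← Complex.ofReal_cpow hn.le, ← Complex.ofReal_cpow (by linarith),
      Real.rpow_add hn, Real.rpow_add (by linarith), Real.rpow_one, Real.rpow_one, ← Real.sqrt_eq_rpow, ← Real.sqrt_eq_rpow]
    push_cast
    ring
  set p : ℕ → ℝ := fun N => ∑ k ∈ Finset.range N, √((k:ℝ)+1) with hp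
  have e : ∀ N : ℕ, ∑ k ∈ Finset.range N, VV (-1/2) ((k:ℝ)+1) = ((-(3/4) * (p N + (p N + √((N:ℝ)+1) - 1)) + (((N:ℝ)+1) * √((N:ℝ)+1) - 1) : ℝ) : ℂ) := by
    intro N
    induction N with
    | zero => simp [hp]
    | succ N ih =>
      rw [Finset.sum_range_succ, ih, cp _ (by positivity)]
      simp only [hp, Finset.sum_range_succ]
      push_cast
      ring
  simp_rw [e] at hT
  have hreal := (Complex.continuous_re.tendsto _).comp hT
  simp only [Function.comp_def, ofReal_re] at hreal
  have hz2 : riemannZeta (-1/2) = ((riemannZeta (-1/2)).re : ℂ) := by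
    have h3 := (Complex.continuous_ofReal.tendsto _).comp hreal
    have h4 := tendsto_nhds_unique hT h3
    have h5 := congrArg Complex.im h4
    simp at h5
    apply Complex.ext
    · simp
    · simpa using h5
  refine ⟨_, hz2, ?_⟩
  have hsh : Tendsto (fun N : ℕ => p (N+1) - 2 / 3 * ((N+1 : ℕ) * √((N+1 : ℕ):ℝ)) - 1 / 2 * √((N+1 : ℕ):ℝ)) atTop (𝓝 (riemannZeta (-1/2)).re) := by
    have := ((hreal.const_mul (-2/3))).sub_const (1/6)
    refine (this.congr fun N => ?_).trans (le_of_eq ?_)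
    · simp only [hp, Finset.sum_range_succ]
      push_cast; ring
    · congr 1
      simp; ring
  exact (tendsto_add_atTop_iff_nat 1).1 hsh

lemma zeta_three_half : ((∑' k : ℕ, 1 / (((k:ℝ)+1) * √((k:ℝ)+1)) : ℝ) : ℂ) = -4 * π * riemannZeta (-1/2) := by
  have h1 : riemannZeta (3/2) = ((∑' k : ℕ, 1 / (((k:ℝ)+1) * √((k:ℝ)+1)) : ℝ) : ℂ) := by
    rw [zeta_eq_tsum_one_div_nat_add_one_cpow (by norm_num), Complex.ofReal_tsum]
    congr 1
    ext k
    have hk : (0:ℝ) < (k:ℝ) + 1 := by positivity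
    have e' : (3/2 : ℂ) = ((1 + 1/2 : ℝ) : ℂ) := by push_cast; norm_num
    have e2 : ((k:ℂ) + 1) = (((k:ℝ) + 1 : ℝ) : ℂ) := by push_cast; rfl
    rw [e', e2, ← Complex.ofReal_cpow hk.le, Real.rpow_add hk, Real.rpow_one, ← Real.sqrt_eq_rpow]
    push_cast; rfl
  have h2 := riemannZeta_one_sub (s := 3/2) (by
    intro n h
    have := congrArg Complex.re h
    simp at this
    have h0 : (0:ℝ) ≤ n := by positivity
    norm_num at this
    linarith) (by norm_num)
  have hG : Complex.Gamma (3/2) = ((√π / 2 : ℝ) : ℂ) := by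
    have : (3/2 : ℂ) = 1/2 + 1 := by norm_num
    rw [this, Complex.Gamma_add_one _ (by norm_num)]
    have e : (1/2 : ℂ) = ((1/2 : ℝ) : ℂ) := by push_cast; rfl
    rw [e, Complex.Gamma_ofReal, Real.Gamma_one_half_eq]
    push_cast; ring
  have hC : Complex.cos (π * (3/2) / 2) = ((-(√2 / 2) : ℝ) : ℂ) := by
    have : (π * (3/2) / 2 : ℂ) = ((π - π / 4 : ℝ) : ℂ) := by push_cast; ring
    rw [this, ← Complex.ofReal_cos, Real.cos_pi_sub, Real.cos_pi_div_four]
  have hP : (2 * π : ℂ) ^ (-(3/2) : ℂ) = ((1 / ((2 * π) * √(2 * π)) : ℝ) : ℂ) := by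
    have e' : (-(3/2) : ℂ) = ((-(1 + 1/2) : ℝ) : ℂ) := by push_cast; norm_num
    have hk : (0:ℝ) < 2 * π := by positivity
    have e2 : (2 * π : ℂ) = ((2 * π : ℝ) : ℂ) := by push_cast; rfl
    rw [e', e2, ← Complex.ofReal_cpow hk.le, Real.rpow_neg hk.le, Real.rpow_add hk, Real.rpow_one, ← Real.sqrt_eq_rpow, one_div]
  have h3 : (1 - 3/2 : ℂ) = -1/2 := by norm_num
  rw [h3, hG, hC, hP, h1] at h2
  rw [h2]
  set Z := ∑' k : ℕ, 1 / (((k:ℝ)+1) * √((k:ℝ)+1))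
  norm_cast
  have e1 : √(2 * π) = √2 * √π := Real.sqrt_mul (by norm_num) _
  have p1 : 0 < √2 := by positivity
  have p2 : 0 < √π := Real.sqrt_pos.2 Real.pi_pos
  have p3 := Real.pi_pos
  rw [e1]
  field_simp
  norm_num

end L3
section L4
open MeasureTheory Set Filter Topology

lemma sum32 : Summable (fun k : ℕ => 1 / (((k:ℝ)+1) * √((k:ℝ)+1))) := by
  have h1 : Summable (fun k : ℕ => ((k+1 : ℕ):ℝ) ^ (-(3/2) : ℝ)) :=
    (summable_nat_add_iff 1).2 (Real.summable_nat_rpow.2 (by norm_num))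
  refine h1.congr fun k => ?_
  have hk : (0:ℝ) < (k:ℝ) + 1 := by positivity
  push_cast
  rw [Real.rpow_neg hk.le, Real.sqrt_eq_rpow, one_div]
  congr 1
  nth_rewrite 2 [← Real.rpow_one ((k:ℝ)+1)]
  rw [← Real.rpow_add hk]; norm_num

noncomputable def SA (a : ℝ) : ℝ := ∑' k : ℕ, Real.exp (-a / ((k:ℝ)+1)) / (((k:ℝ)+1) * √((k:ℝ)+1))
noncomputable def SB (a : ℝ) : ℝ := ∑' k : ℕ, (1 - Real.exp (-a / ((k:ℝ)+1))) / √((k:ℝ)+1)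
noncomputable def SC (a : ℝ) : ℝ := ∑' k : ℕ, √((k:ℝ)+1) * (Real.exp (-a / ((k:ℝ)+1)) - 1 + a / ((k:ℝ)+1))
noncomputable def EE (a : ℝ) : ℝ := ∑' n : ℕ, Real.exp (-(uu a n)) * Real.cos (uu a n)
noncomputable def DD (a : ℝ) : ℝ := ∑' n : ℕ, Real.exp (-(uu a n)) * (Real.cos (uu a n) - Real.sin (uu a n)) / √((n:ℝ)+1)
noncomputable def qq (u : ℝ) : ℝ := -(1 / (2 * π)) * (Real.exp (-u) * (u * Real.sin u + (Real.sin u + Real.cos u) / 2))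
noncomputable def QQ (a : ℝ) : ℝ := ∑' n : ℕ, qq (uu a n) / (((n:ℝ)+1) * √((n:ℝ)+1))

lemma SA_eq (a : ℝ) (ha : 0 < a) : SA a = √(π / a) * (1 + 2 * EE a) := by
  rw [EE, ← PhiA a ha, SA]
  congr 1
  ext k
  have hk : (0:ℝ) < (k:ℝ) + 1 := by positivity
  have : (-(3/2) : ℝ) = -(1 + 1/2) := by norm_num
  rw [this, Real.rpow_neg hk.le, Real.rpow_add hk, Real.rpow_one, ← Real.sqrt_eq_rpow]
  field_simp

lemma exp_neg_div_le_one {a : ℝ} (ha : 0 ≤ a) (k : ℕ) : Real.exp (-a / ((k:ℝ)+1)) ≤ 1 := by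
  rw [Real.exp_le_one_iff, neg_div]
  have : 0 ≤ a / ((k:ℝ)+1) := by positivity
  linarith

lemma one_sub_exp_le {v : ℝ} : 1 - Real.exp (-v) ≤ v := by
  have := Real.add_one_le_exp (-v); linarith

lemma exp_second {v : ℝ} (hv : 0 ≤ v) : Real.exp (-v) - 1 + v ≤ v ^ 2 := by
  have h := Real.add_one_le_exp v
  have h2 : Real.exp (-v) ≤ 1 / (v + 1) := by
    rw [Real.exp_neg, one_div]; exact inv_anti₀ (by linarith) h
  have h3 : 1 / (v + 1) ≤ 1 - v + v ^ 2 := by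
    rw [div_le_iff₀ (by linarith)]; nlinarith [pow_nonneg hv 3]
  linarith

lemma SA_summable {a : ℝ} (ha : 0 ≤ a) : Summable (fun k : ℕ => Real.exp (-a / ((k:ℝ)+1)) / (((k:ℝ)+1) * √((k:ℝ)+1))) := by
  refine Summable.of_nonneg_of_le (fun k => by positivity) (fun k => ?_) sum32
  gcongr
  exact exp_neg_div_le_one ha k

lemma SB_term {a : ℝ} (ha : 0 ≤ a) (k : ℕ) : 0 ≤ (1 - Real.exp (-a / ((k:ℝ)+1))) / √((k:ℝ)+1) ∧
   (1 - Real.exp (-a / ((k:ℝ)+1))) / √((k:ℝ)+1) ≤ a * (1 / (((k:ℝ)+1) * √((k:ℝ)+1))) := by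
  constructor
  · have := exp_neg_div_le_one ha k
    have : 0 ≤ 1 - Real.exp (-a / ((k:ℝ)+1)) := by linarith
    positivity
  · have h := one_sub_exp_le (v := a / ((k:ℝ)+1))
    rw [← neg_div] at h
    calc _ ≤ (a / ((k:ℝ)+1)) / √((k:ℝ)+1) := by gcongr
      _ = _ := by field_simp

lemma SB_summable {a : ℝ} (ha : 0 ≤ a) : Summable (fun k : ℕ => (1 - Real.exp (-a / ((k:ℝ)+1))) / √((k:ℝ)+1)) :=
  Summable.of_nonneg_of_le (fun k => (SB_term ha k).1) (fun k => (SB_term ha k).2) (sum32.mul_left a)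

lemma SC_term {a : ℝ} (ha : 0 ≤ a) (k : ℕ) : 0 ≤ √((k:ℝ)+1) * (Real.exp (-a / ((k:ℝ)+1)) - 1 + a / ((k:ℝ)+1)) ∧
   √((k:ℝ)+1) * (Real.exp (-a / ((k:ℝ)+1)) - 1 + a / ((k:ℝ)+1)) ≤ a ^ 2 * (1 / (((k:ℝ)+1) * √((k:ℝ)+1))) := by
  have hk : (0:ℝ) < (k:ℝ) + 1 := by positivity
  constructor
  · have h := one_sub_exp_le (v := a / ((k:ℝ)+1))
    rw [← neg_div] at h
    have : 0 ≤ Real.exp (-a / ((k:ℝ)+1)) - 1 + a / ((k:ℝ)+1) := by linarith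
    positivity
  · have h := exp_second (v := a / ((k:ℝ)+1)) (by positivity)
    rw [← neg_div] at h
    calc _ ≤ √((k:ℝ)+1) * (a / ((k:ℝ)+1)) ^ 2 := by gcongr
      _ = _ := by
        have h2 := Real.sq_sqrt hk.le
        have h3 : 0 < √((k:ℝ)+1) := Real.sqrt_pos.2 hk
        field_simp
        rw [h2]

lemma SC_summable {a : ℝ} (ha : 0 ≤ a) : Summable (fun k : ℕ => √((k:ℝ)+1) * (Real.exp (-a / ((k:ℝ)+1)) - 1 + a / ((k:ℝ)+1))) :=
  Summable.of_nonneg_of_le (fun k => (SC_term ha k).1) (fun k => (SC_term ha k).2) (sum32.mul_left (a ^ 2))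

lemma exp_k_deriv (k : ℕ) (a : ℝ) : HasDerivAt (fun a : ℝ => Real.exp (-a / ((k:ℝ)+1))) (-(Real.exp (-a / ((k:ℝ)+1)) / ((k:ℝ)+1))) a := by
  have := (((hasDerivAt_id a).neg).div_const ((k:ℝ)+1)).exp
  refine this.congr_deriv ?_
  simp; ring

lemma SB_deriv {a : ℝ} (ha : 0 < a) : HasDerivAt SB (SA a) a := by
  rw [SA]
  refine hasDerivAt_tsum_of_isPreconnected (t := Ioi 0) (y₀ := a)
    (g := fun (k : ℕ) (a : ℝ) => (1 - Real.exp (-a / ((k:ℝ)+1))) / √((k:ℝ)+1))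
    (g' := fun (k : ℕ) (a : ℝ) => Real.exp (-a / ((k:ℝ)+1)) / (((k:ℝ)+1) * √((k:ℝ)+1)))
    sum32 isOpen_Ioi isPreconnected_Ioi ?_ ?_ ha (SB_summable ha.le) ha
  · intro k y hy
    refine (((exp_k_deriv k y).const_sub 1).div_const _).congr_deriv ?_
    field_simp
  · intro k y hy
    have hy : 0 < y := hy
    rw [Real.norm_of_nonneg (by positivity)]
    gcongr
    exact exp_neg_div_le_one hy.le k

lemma SC_deriv {a : ℝ} (ha : 0 < a) : HasDerivAt SC (SB a) a := by
  rw [SB]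
  refine hasDerivAt_tsum_of_isPreconnected (t := Ioo 0 (a+1)) (y₀ := a)
    (g := fun (k : ℕ) (a : ℝ) => √((k:ℝ)+1) * (Real.exp (-a / ((k:ℝ)+1)) - 1 + a / ((k:ℝ)+1)))
    (g' := fun (k : ℕ) (a : ℝ) => (1 - Real.exp (-a / ((k:ℝ)+1))) / √((k:ℝ)+1))
    (sum32.mul_left (a+1)) isOpen_Ioo isPreconnected_Ioo ?_ ?_ ⟨ha, by linarith⟩ (SC_summable ha.le) ⟨ha, by linarith⟩
  · intro k y hy
    have hk : (0:ℝ) < (k:ℝ) + 1 := by positivity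
    have h1 : HasDerivAt (fun y : ℝ => y / ((k:ℝ)+1)) (1 / ((k:ℝ)+1)) y := (hasDerivAt_id y).div_const _
    refine ((((exp_k_deriv k y).sub_const 1).add h1).const_mul _).congr_deriv ?_
    have h2 := Real.sq_sqrt hk.le
    have h3 : 0 < √((k:ℝ)+1) := Real.sqrt_pos.2 hk
    field_simp
    rw [h2]; ring
  · intro k y hy
    have hy1 : 0 < y := hy.1
    rw [Real.norm_of_nonneg (SB_term hy1.le k).1]
    refine (SB_term hy1.le k).2.trans ?_
    have := hy.2.le
    gcongr

lemma uu_pos {a : ℝ} (ha : 0 < a) (n : ℕ) : 0 < uu a n := by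
  have hk : (0:ℝ) < (n:ℝ) + 1 := by positivity
  have : 0 < √(π * a * ((n:ℝ) + 1)) := Real.sqrt_pos.2 (by positivity)
  rw [uu]; positivity

lemma uu_sq {a : ℝ} (ha : 0 < a) (n : ℕ) : uu a n ^ 2 = 4 * (π * a * ((n:ℝ)+1)) := by
  rw [uu, mul_pow, Real.sq_sqrt (by positivity)]; norm_num

lemma uu_mono {a b : ℝ} (h : a ≤ b) (n : ℕ) : uu a n ≤ uu b n := by
  unfold uu
  gcongr

lemma uu_deriv {a : ℝ} (ha : 0 < a) (n : ℕ) : HasDerivAt (fun a => uu a n) (2 * π * ((n:ℝ)+1) / uu a n) a := by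
  have h1 : HasDerivAt (fun a : ℝ => π * a * ((n:ℝ)+1)) (π * 1 * ((n:ℝ)+1)) a :=
    ((hasDerivAt_id a).const_mul π).mul_const _
  have h2 := (h1.sqrt (by positivity)).const_mul 2
  refine h2.congr_deriv ?_
  rw [uu]
  ring

lemma abs_cs (u : ℝ) : |Real.cos u - Real.sin u| ≤ 2 := by
  have h1 := Real.abs_cos_le_one u
  have h2 := Real.abs_sin_le_one u
  calc _ ≤ |Real.cos u| + |Real.sin u| := abs_sub _ _
    _ ≤ 2 := by linarith

lemma one_le_sqrt_nat (n : ℕ) : 1 ≤ √((n:ℝ)+1) := by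
  rw [Real.one_le_sqrt]
  have : (0:ℝ) ≤ n := by positivity
  linarith

lemma DD_term {a : ℝ} (n : ℕ) : ‖Real.exp (-(uu a n)) * (Real.cos (uu a n) - Real.sin (uu a n)) / √((n:ℝ)+1)‖ ≤ 2 * Real.exp (-(uu a n)) := by
  have h1 := one_le_sqrt_nat n
  rw [norm_div, norm_mul, Real.norm_of_nonneg (Real.exp_pos _).le, Real.norm_of_nonneg (by positivity : 0 ≤ √((n:ℝ)+1)), div_le_iff₀ (by positivity), Real.norm_eq_abs]
  have h2 := abs_cs (uu a n)
  have h3 := Real.exp_pos (-(uu a n))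
  nlinarith [abs_nonneg (Real.cos (uu a n) - Real.sin (uu a n)), mul_le_mul_of_nonneg_left h2 h3.le, mul_le_mul_of_nonneg_left h1 h3.le]

lemma DD_summable {a : ℝ} (ha : 0 < a) : Summable (fun n : ℕ => Real.exp (-(uu a n)) * (Real.cos (uu a n) - Real.sin (uu a n)) / √((n:ℝ)+1)) :=
  Summable.of_norm_bounded ((summable_exp_uu a ha).mul_left 2) (fun n => DD_term n)

lemma EE_term {a : ℝ} (n : ℕ) : ‖Real.exp (-(uu a n)) * Real.cos (uu a n)‖ ≤ Real.exp (-(uu a n)) := by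
  rw [norm_mul, Real.norm_of_nonneg (Real.exp_pos _).le]
  exact mul_le_of_le_one_right (Real.exp_pos _).le (Real.abs_cos_le_one _)

lemma EE_summable {a : ℝ} (ha : 0 < a) : Summable (fun n : ℕ => Real.exp (-(uu a n)) * Real.cos (uu a n)) :=
  Summable.of_norm_bounded (summable_exp_uu a ha) (fun n => EE_term n)

lemma DD_deriv {a : ℝ} (ha : 0 < a) : HasDerivAt DD (-2 * √(π / a) * EE a) a := by
  have ha2 : 0 < a / 2 := by positivity
  rw [EE, ← tsum_mul_left]
  refine hasDerivAt_tsum_of_isPreconnected (t := Ioi (a/2)) (y₀ := a)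
    (g' := fun n y => -2 * √(π / y) * (Real.exp (-(uu y n)) * Real.cos (uu y n)))
    ((summable_exp_uu (a/2) ha2).mul_left (2 * √(π / (a/2)))) isOpen_Ioi isPreconnected_Ioi ?_ ?_ (by simp; linarith) (DD_summable ha) (by simp; linarith)
  · intro n y hy
    have hy : 0 < y := lt_trans ha2 hy
    have hu := uu_deriv hy n
    refine ((hu.neg.exp.mul (hu.cos.sub hu.sin)).div_const _).congr_deriv ?_
    have e1 : 2 * π * ((n:ℝ)+1) / uu y n = √(π / y) * √((n:ℝ)+1) := by
      have hp := uu_pos hy n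
      rw [div_eq_iff hp.ne', uu, ← Real.sqrt_mul (by positivity)]
      rw [mul_comm 2 (√(π * y * ((n:ℝ)+1))), ← mul_assoc, ← Real.sqrt_mul (by positivity)]
      have : π / y * ((n:ℝ)+1) * (π * y * ((n:ℝ)+1)) = (π * ((n:ℝ)+1)) ^ 2 := by field_simp
      rw [this, Real.sqrt_sq (by positivity)]; ring
    have hs := one_le_sqrt_nat n
    rw [e1]
    simp only [Pi.neg_apply, Pi.sub_apply]
    field_simp
    ring
  · intro n y hy
    have hy1 : a / 2 < y := hy
    have hy : 0 < y := lt_trans ha2 hy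
    rw [norm_mul, norm_mul, norm_neg, Real.norm_of_nonneg (by norm_num : (0:ℝ) ≤ 2), Real.norm_of_nonneg (by positivity : 0 ≤ √(π / y))]
    have h1 := (EE_term (a := y) n)
    have h2 : Real.exp (-(uu y n)) ≤ Real.exp (-(uu (a/2) n)) := by
      rw [Real.exp_le_exp]; linarith [uu_mono hy1.le n]
    gcongr
    exact h1.trans h2

lemma qq_deriv (u : ℝ) : HasDerivAt qq (-(1 / (2 * π)) * (u * (Real.exp (-u) * (Real.cos u - Real.sin u)))) u := by
  have h1 : HasDerivAt (fun u : ℝ => Real.exp (-u)) (-Real.exp (-u)) u := by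
    simpa using (hasDerivAt_neg u).exp
  have h2 := (((hasDerivAt_id u).mul (Real.hasDerivAt_sin u)).add (((Real.hasDerivAt_sin u).add (Real.hasDerivAt_cos u)).div_const 2))
  refine ((h1.mul h2).const_mul (-(1 / (2 * π)))).congr_deriv ?_
  simp
  ring

lemma qq_bound {u : ℝ} (hu : 0 ≤ u) : |qq u| ≤ 1 := by
  have h1 := Real.abs_cos_le_one u
  have h2 := Real.abs_sin_le_one u
  have h3 : |u * Real.sin u + (Real.sin u + Real.cos u) / 2| ≤ u + 1 := by
    calc _ ≤ |u * Real.sin u| + |(Real.sin u + Real.cos u) / 2| := abs_add_le _ _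
      _ ≤ u * 1 + (1 + 1) / 2 := by
        rw [abs_mul, abs_of_nonneg hu, abs_div, abs_of_nonneg (by norm_num : (0:ℝ) ≤ 2)]
        have := abs_add_le (Real.sin u) (Real.cos u)
        gcongr
        linarith
      _ = _ := by ring
  have h4 : Real.exp (-u) * (u + 1) ≤ 1 := by
    rw [Real.exp_neg, inv_mul_le_iff₀ (Real.exp_pos _), mul_one]
    exact Real.add_one_le_exp u
  have h5 : 1 / (2 * π) ≤ 1 := by
    rw [div_le_one (by positivity)]; linarith [Real.pi_gt_three]
  rw [qq, abs_mul, abs_neg, abs_of_nonneg (by positivity), abs_mul, abs_of_pos (Real.exp_pos _)]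
  calc _ ≤ 1 * (Real.exp (-u) * (u + 1)) := by gcongr
    _ ≤ 1 := by linarith

lemma QQ_term {a : ℝ} (ha : 0 < a) (n : ℕ) : ‖qq (uu a n) / (((n:ℝ)+1) * √((n:ℝ)+1))‖ ≤ 1 / (((n:ℝ)+1) * √((n:ℝ)+1)) := by
  rw [norm_div, Real.norm_of_nonneg (by positivity : 0 ≤ ((n:ℝ)+1) * √((n:ℝ)+1))]
  gcongr
  exact qq_bound (uu_pos ha n).le

lemma QQ_summable {a : ℝ} (ha : 0 < a) : Summable (fun n : ℕ => qq (uu a n) / (((n:ℝ)+1) * √((n:ℝ)+1))) :=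
  Summable.of_norm_bounded sum32 (QQ_term ha)

lemma QQ_deriv {a : ℝ} (ha : 0 < a) : HasDerivAt QQ (-DD a) a := by
  have ha2 : 0 < a / 2 := by positivity
  rw [DD, ← tsum_neg]
  refine hasDerivAt_tsum_of_isPreconnected (t := Ioi (a/2)) (y₀ := a)
    (g' := fun n y => -(Real.exp (-(uu y n)) * (Real.cos (uu y n) - Real.sin (uu y n)) / √((n:ℝ)+1)))
    ((summable_exp_uu (a/2) ha2).mul_left 2) isOpen_Ioi isPreconnected_Ioi ?_ ?_ (by simp; linarith) (QQ_summable ha) (by simp; linarith)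
  · intro n y hy
    have hy : 0 < y := lt_trans ha2 hy
    have hu := uu_deriv hy n
    have hp := uu_pos hy n
    refine (((qq_deriv (uu y n)).comp y hu).div_const _).congr_deriv ?_
    have hs := one_le_sqrt_nat n
    field_simp
  · intro n y hy
    have hy1 : a / 2 < y := hy
    rw [norm_neg]
    refine (DD_term n).trans ?_
    have h2 : Real.exp (-(uu y n)) ≤ Real.exp (-(uu (a/2) n)) := by
      rw [Real.exp_le_exp]; linarith [uu_mono hy1.le n]
    linarith

end L4
section L5
open MeasureTheory Set Filter Topology

lemma const_of_deriv {F : ℝ → ℝ} (h : ∀ a, 0 < a → HasDerivAt F 0 a) {a b : ℝ} (ha : 0 < a) (hb : 0 < b) : F a = F b := by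
  have key := (convex_Ioi (0:ℝ)).norm_image_sub_le_of_norm_hasDerivWithin_le (f := F) (f' := fun _ => 0) (C := 0)
    (fun x hx => (h x hx).hasDerivWithinAt) (by simp) (x := b) (y := a) hb ha
  simp at key
  linarith

lemma const_of_tendsto {F : ℝ → ℝ} (h : ∀ a, 0 < a → HasDerivAt F 0 a) {c : ℝ} {l : Filter ℝ} [l.NeBot]
    (hl : ∀ᶠ a in l, 0 < a) (hc : Tendsto F l (𝓝 c)) {a : ℝ} (ha : 0 < a) : F a = c := by
  have : Tendsto (fun _ : ℝ => F a) l (𝓝 c) := by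
    refine hc.congr' ?_
    filter_upwards [hl] with b hb
    exact const_of_deriv h hb ha
  exact tendsto_nhds_unique tendsto_const_nhds this

noncomputable def KK : ℝ := ∑' n : ℕ, Real.exp (-(1 * √((n:ℝ)+1)))

lemma exp_uu_le {a : ℝ} (ha : 0 < a) (h1 : 1 ≤ √(π * a)) (n : ℕ) :
    Real.exp (-(uu a n)) ≤ Real.exp (-√(π * a)) * Real.exp (-(1 * √((n:ℝ)+1))) := by
  rw [← Real.exp_add, Real.exp_le_exp, uu_eq a ha n]
  have := one_le_sqrt_nat n
  nlinarith

lemma tsum_exp_uu_le {a : ℝ} (ha : 0 < a) (h1 : 1 ≤ √(π * a)) :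
    ∑' n, Real.exp (-(uu a n)) ≤ Real.exp (-√(π * a)) * KK := by
  rw [KK, ← tsum_mul_left]
  exact (summable_exp_uu a ha).tsum_le_tsum (exp_uu_le ha h1) ((summable_exp_sqrt 1 one_pos).mul_left _)

lemma EE_le {a : ℝ} (ha : 0 < a) (h1 : 1 ≤ √(π * a)) : ‖EE a‖ ≤ Real.exp (-√(π * a)) * KK :=
  (tsum_of_norm_bounded (summable_exp_uu a ha).hasSum (fun n => EE_term n)).trans (tsum_exp_uu_le ha h1)

lemma DD_le {a : ℝ} (ha : 0 < a) (h1 : 1 ≤ √(π * a)) : ‖DD a‖ ≤ 2 * (Real.exp (-√(π * a)) * KK) := by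
  refine (tsum_of_norm_bounded ((summable_exp_uu a ha).hasSum.mul_left 2) (fun n => DD_term n)).trans ?_
  have := tsum_exp_uu_le ha h1
  linarith

lemma sqrt_pi_tendsto : Tendsto (fun a : ℝ => √(π * a)) atTop atTop :=
  Real.tendsto_sqrt_atTop.comp (tendsto_id.const_mul_atTop Real.pi_pos)

lemma ev_good : ∀ᶠ a : ℝ in atTop, 0 < a ∧ 1 ≤ √(π * a) :=
  (eventually_gt_atTop 0).and (sqrt_pi_tendsto.eventually_ge_atTop 1)

lemma exp_sqrt_tendsto : Tendsto (fun a : ℝ => Real.exp (-√(π * a))) atTop (𝓝 0) :=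
  Real.tendsto_exp_neg_atTop_nhds_zero.comp sqrt_pi_tendsto

lemma DD_tendsto : Tendsto DD atTop (𝓝 0) := by
  have : Tendsto (fun a : ℝ => 2 * (Real.exp (-√(π * a)) * KK)) atTop (𝓝 0) := by
    simpa using (exp_sqrt_tendsto.mul_const KK).const_mul 2
  refine squeeze_zero_norm' ?_ this
  filter_upwards [ev_good] with a ha using DD_le ha.1 ha.2

lemma sqrt_EE_tendsto : Tendsto (fun a => √(π * a) * EE a) atTop (𝓝 0) := by
  have h0 : Tendsto (fun a : ℝ => √(π * a) * Real.exp (-√(π * a))) atTop (𝓝 0) := by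
    have := (Real.tendsto_pow_mul_exp_neg_atTop_nhds_zero 1).comp sqrt_pi_tendsto
    simpa [Function.comp_def] using this
  have : Tendsto (fun a : ℝ => √(π * a) * Real.exp (-√(π * a)) * KK) atTop (𝓝 0) := by
    simpa using (h0.mul_const KK)
  refine squeeze_zero_norm' ?_ this
  filter_upwards [ev_good] with a ha
  rw [norm_mul, Real.norm_of_nonneg (Real.sqrt_nonneg _), mul_assoc]
  gcongr
  exact EE_le ha.1 ha.2

noncomputable def GG (a t : ℝ) : ℝ := 2 * √t * (1 - Real.exp (-a / t))
noncomputable def mm (a t : ℝ) : ℝ := (1 - Real.exp (-a / t)) / √t - 2 * a * (Real.exp (-a / t) / (t * √t))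
noncomputable def mm' (a t : ℝ) : ℝ := (-(1 - Real.exp (-(a / t))) / 2 + 2 * ((a/t) * Real.exp (-(a / t))) - 2 * ((a/t)^2 * Real.exp (-(a / t)))) / (t * √t)

lemma exp_t_deriv (a : ℝ) {t : ℝ} (ht : 0 < t) : HasDerivAt (fun t => Real.exp (-a / t)) (Real.exp (-a / t) * (a / t ^ 2)) t := by
  have h := ((hasDerivAt_const t (-a)).div (hasDerivAt_id t) ht.ne').exp
  refine h.congr_deriv ?_
  simp

lemma GG_deriv (a : ℝ) {t : ℝ} (ht : 0 < t) : HasDerivAt (GG a) (mm a t) t := by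
  have h1 := (Real.hasDerivAt_sqrt ht.ne').const_mul 2
  refine (h1.mul ((exp_t_deriv a ht).const_sub 1)).congr_deriv ?_
  obtain ⟨s, hs, rfl⟩ : ∃ s, 0 < s ∧ t = s ^ 2 := ⟨√t, Real.sqrt_pos.2 ht, (Real.sq_sqrt ht.le).symm⟩
  rw [mm, Real.sqrt_sq hs.le]
  field_simp
  ring

lemma mm_deriv (a : ℝ) {t : ℝ} (ht : 0 < t) : HasDerivAt (mm a) (mm' a t) t := by
  have h1 := (Real.hasDerivAt_sqrt ht.ne')
  have h2 := exp_t_deriv a ht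
  have hs : √t ≠ 0 := (Real.sqrt_pos.2 ht).ne'
  refine (((h2.const_sub 1).div h1 hs).sub ((h2.div ((hasDerivAt_id t).mul h1) (mul_ne_zero ht.ne' hs)).const_mul (2 * a))).congr_deriv ?_
  obtain ⟨s, hs0, rfl⟩ : ∃ s, 0 < s ∧ t = s ^ 2 := ⟨√t, Real.sqrt_pos.2 ht, (Real.sq_sqrt ht.le).symm⟩
  simp only [mm', Pi.mul_apply, id, Real.sqrt_sq hs0.le, neg_div]
  field_simp
  ring

lemma y_exp {y : ℝ} (hy : 0 ≤ y) : y * Real.exp (-y) ≤ 1 ∧ y ^ 2 * Real.exp (-y) ≤ 2 := by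
  rw [Real.exp_neg]
  have h := Real.quadratic_le_exp_of_nonneg hy
  constructor
  · rw [← div_eq_mul_inv, div_le_one (Real.exp_pos _)]; nlinarith
  · rw [← div_eq_mul_inv, div_le_iff₀ (Real.exp_pos _)]; nlinarith

lemma mm'_bound {a t : ℝ} (ha : 0 ≤ a) (k : ℕ) (ht : ((k:ℝ)+1)/2 ≤ t) : ‖mm' a t‖ ≤ 28 * (1 / (((k:ℝ)+1) * √((k:ℝ)+1))) := by
  have hk : (0:ℝ) < (k:ℝ) + 1 := by positivity
  have ht0 : 0 < t := by linarith
  have hy : 0 ≤ a / t := by positivity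
  obtain ⟨h1, h2⟩ := y_exp hy
  have h3 : Real.exp (-(a/t)) ≤ 1 := Real.exp_le_one_iff.2 (by linarith)
  have h4 := Real.exp_pos (-(a/t))
  have h5 : 0 ≤ (a/t) * Real.exp (-(a / t)) := by positivity
  have h6 : 0 ≤ (a/t)^2 * Real.exp (-(a / t)) := by positivity
  have h7 : √((k:ℝ)+1) / 2 ≤ √t := by
    apply Real.le_sqrt_of_sq_le
    rw [div_pow, Real.sq_sqrt hk.le]; linarith
  have hs := one_le_sqrt_nat k
  rw [mm', norm_div, Real.norm_of_nonneg (by positivity : 0 ≤ t * √t)]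
  calc _ ≤ 7 / ((((k:ℝ)+1)/2) * (√((k:ℝ)+1)/2)) := by
        gcongr
        rw [Real.norm_eq_abs, abs_le]
        constructor <;> linarith
    _ = _ := by field_simp; norm_num

lemma dd_bound {a : ℝ} (ha : 0 ≤ a) (k : ℕ) : ‖mm a ((k:ℝ)+1) - (GG a ((k:ℝ)+1) - GG a k)‖ ≤ 28 * (1 / (((k:ℝ)+1) * √((k:ℝ)+1))) := by
  rcases Nat.eq_zero_or_pos k with rfl | hk
  · simp only [mm, GG, Nat.cast_zero, zero_add, Real.sqrt_one, Real.sqrt_zero, div_one, mul_one, mul_zero, zero_mul, sub_zero]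
    obtain ⟨h1, h2⟩ := y_exp ha
    have h3 : Real.exp (-a) ≤ 1 := Real.exp_le_one_iff.2 (by linarith)
    have h4 := Real.exp_pos (-a)
    have h5 : 0 ≤ a * Real.exp (-a) := by positivity
    rw [Real.norm_eq_abs, abs_le]
    constructor <;> linarith
  · have hk1 : (1:ℝ) ≤ k := by exact_mod_cast hk
    set C := 28 * (1 / (((k:ℝ)+1) * √((k:ℝ)+1))) with hC
    have hC0 : 0 ≤ C := by positivity
    have pos : ∀ t ∈ Icc (k:ℝ) (k+1), 0 < t := fun t ht => by linarith [ht.1]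
    have rm : (k:ℝ)+1 ∈ Icc (k:ℝ) (k+1) := ⟨by linarith, le_rfl⟩
    have lm : (k:ℝ) ∈ Icc (k:ℝ) (k+1) := ⟨le_rfl, by linarith⟩
    have step1 : ∀ t ∈ Icc (k:ℝ) (k+1), ‖mm a t - mm a (k+1)‖ ≤ C := by
      intro t ht
      have := (convex_Icc (k:ℝ) (k+1)).norm_image_sub_le_of_norm_hasDerivWithin_le (f := mm a) (f' := mm' a) (C := C)
        (fun x hx => (mm_deriv a (pos x hx)).hasDerivWithinAt) (fun x hx => mm'_bound ha k (by linarith [hx.1])) rm ht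
      refine this.trans ?_
      have : ‖t - ((k:ℝ)+1)‖ ≤ 1 := by
        rw [Real.norm_eq_abs, abs_le]; constructor <;> linarith [ht.1, ht.2]
      nlinarith
    have step2 := (convex_Icc (k:ℝ) (k+1)).norm_image_sub_le_of_norm_hasDerivWithin_le (f := fun t => GG a t - t * mm a (k+1)) (f' := fun t => mm a t - 1 * mm a (k+1)) (C := C)
        (fun x hx => ((GG_deriv a (pos x hx)).sub ((hasDerivAt_id x).mul_const _)).hasDerivWithinAt) (fun x hx => by simpa using step1 x hx) rm lm
    have e : ‖(k:ℝ) - (k+1)‖ = 1 := by simp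
    rw [e, mul_one] at step2
    refine le_trans (le_of_eq ?_) step2
    congr 1
    ring

lemma dd_hasSum {a : ℝ} (ha : 0 ≤ a) : ∑' k : ℕ, (mm a ((k:ℝ)+1) - (GG a ((k:ℝ)+1) - GG a k)) = SB a - 2 * a * SA a := by
  have hs : Summable (fun k : ℕ => mm a ((k:ℝ)+1) - (GG a ((k:ℝ)+1) - GG a k)) :=
    Summable.of_norm_bounded (sum32.mul_left 28) (dd_bound ha)
  have h1 := hs.hasSum.tendsto_sum_nat
  have hm : HasSum (fun k : ℕ => mm a ((k:ℝ)+1)) (SB a - 2 * a * SA a) :=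
    (SB_summable ha).hasSum.sub ((SA_summable ha).hasSum.mul_left _)
  have h2 := hm.tendsto_sum_nat
  have hG : Tendsto (fun N : ℕ => GG a N) atTop (𝓝 0) := by
    have hb : Tendsto (fun N : ℕ => 2 * a / √(N:ℝ)) atTop (𝓝 0) :=
      tendsto_const_nhds.div_atTop (Real.tendsto_sqrt_atTop.comp tendsto_natCast_atTop_atTop)
    refine squeeze_zero' ?_ ?_ hb
    · refine Eventually.of_forall fun N => ?_
      have h0 : (0:ℝ) ≤ a / N := by positivity
      have : Real.exp (-a / (N:ℝ)) ≤ 1 := by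
        rw [Real.exp_le_one_iff, neg_div]; linarith
      rw [GG]
      have : 0 ≤ 1 - Real.exp (-a / (N:ℝ)) := by linarith
      positivity
    · filter_upwards [eventually_gt_atTop 0] with N hN
      have hN : (0:ℝ) < N := by exact_mod_cast hN
      have h := one_sub_exp_le (v := a / (N:ℝ))
      rw [← neg_div] at h
      have hsq := Real.sq_sqrt hN.le
      have hsp := Real.sqrt_pos.2 hN
      calc GG a N ≤ 2 * √(N:ℝ) * (a / N) := by rw [GG]; gcongr
        _ = _ := by
          nth_rewrite 2 [← hsq]
          field_simp
  have h3 := h2.sub hG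
  refine tendsto_nhds_unique h1 ?_
  rw [sub_zero] at h3
  refine h3.congr fun N => ?_
  rw [Finset.sum_sub_distrib]
  have := Finset.sum_range_sub (fun k : ℕ => GG a k) N
  push_cast at this
  rw [this]
  simp [GG]

lemma exp_lim {c : ℝ} (hc : 0 < c) : Tendsto (fun a : ℝ => Real.exp (-a / c)) atTop (𝓝 0) := by
  have := Real.tendsto_exp_neg_atTop_nhds_zero.comp (tendsto_id.atTop_div_const hc)
  refine this.congr fun a => ?_
  simp [neg_div]

lemma mul_exp_lim {c : ℝ} (hc : 0 < c) : Tendsto (fun a : ℝ => a * Real.exp (-a / c)) atTop (𝓝 0) := by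
  have := ((Real.tendsto_pow_mul_exp_neg_atTop_nhds_zero 1).comp (tendsto_id.atTop_div_const hc)).const_mul c
  rw [mul_zero] at this
  refine this.congr fun a => ?_
  simp [neg_div]
  field_simp

lemma M_tendsto {z : ℝ} (hz : Tendsto (fun N:ℕ => ∑ k ∈ Finset.range N, 1/√((k:ℝ)+1) - 2*√(N:ℝ)) atTop (𝓝 z)) :
    Tendsto (fun a => SB a - 2 * a * SA a) atTop (𝓝 z) := by
  set g : ℕ → ℝ := fun k => 1 / √((k:ℝ)+1) - (2 * √((k:ℝ)+1) - 2 * √(k:ℝ)) with hg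
  have hGlim : ∀ k : ℕ, Tendsto (fun a => GG a k) atTop (𝓝 (2 * √(k:ℝ))) := by
    intro k
    rcases Nat.eq_zero_or_pos k with rfl | hk
    · simp [GG]
    · have hk : (0:ℝ) < k := by exact_mod_cast hk
      simpa [GG] using ((exp_lim hk).const_sub 1).const_mul (2 * √(k:ℝ))
  have hlim : ∀ k : ℕ, Tendsto (fun a => mm a ((k:ℝ)+1) - (GG a ((k:ℝ)+1) - GG a k)) atTop (𝓝 (g k)) := by
    intro k
    have hk : (0:ℝ) < (k:ℝ) + 1 := by positivity
    have h1 := hGlim (k+1)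
    push_cast at h1
    have h2 : Tendsto (fun a => mm a ((k:ℝ)+1)) atTop (𝓝 (1 / √((k:ℝ)+1))) := by
      have e1 := ((exp_lim hk).const_sub 1).div_const (√((k:ℝ)+1))
      have e2 := ((mul_exp_lim hk).const_mul (2 / (((k:ℝ)+1) * √((k:ℝ)+1))))
      have := e1.sub e2
      simp only [sub_zero, mul_zero] at this
      refine this.congr fun a => ?_
      rw [mm]; ring
    exact h2.sub (h1.sub (hGlim k))
  have hb : ∀ k, ‖g k‖ ≤ 28 * (1 / (((k:ℝ)+1) * √((k:ℝ)+1))) := fun k =>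
    le_of_tendsto (hlim k).norm ((eventually_ge_atTop 0).mono fun a ha => dd_bound ha k)
  have hsum : Summable g := Summable.of_norm_bounded (sum32.mul_left 28) hb
  have hgz : ∑' k, g k = z := by
    refine tendsto_nhds_unique hsum.hasSum.tendsto_sum_nat (hz.congr fun N => ?_)
    rw [hg, Finset.sum_sub_distrib]
    have := Finset.sum_range_sub (fun k : ℕ => 2 * √(k:ℝ)) N
    push_cast at this
    rw [this]; simp
  rw [← hgz]
  have := tendsto_tsum_of_dominated_convergence (𝓕 := atTop) (f := fun (a : ℝ) (k : ℕ) => mm a ((k:ℝ)+1) - (GG a ((k:ℝ)+1) - GG a k)) (g := g) (sum32.mul_left 28) hlim ((eventually_ge_atTop 0).mono fun a ha k => dd_bound ha k)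
  refine this.congr' ?_
  filter_upwards [eventually_ge_atTop 0] with a ha using dd_hasSum ha

lemma SB_eq {z : ℝ} (hz : Tendsto (fun N:ℕ => ∑ k ∈ Finset.range N, 1/√((k:ℝ)+1) - 2*√(N:ℝ)) atTop (𝓝 z)) {a : ℝ} (ha : 0 < a) :
    SB a = z + 2 * √(π * a) - DD a := by
  have hd : ∀ a, 0 < a → HasDerivAt (fun a => SB a - 2 * √(π * a) + DD a) 0 a := by
    intro a ha
    have h1 : HasDerivAt (fun a : ℝ => π * a) (π * 1) a := (hasDerivAt_id a).const_mul π
    have h2 := (h1.sqrt (by positivity)).const_mul 2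
    refine (((SB_deriv ha).sub h2).add (DD_deriv ha)).congr_deriv ?_
    rw [SA_eq a ha, Real.sqrt_mul Real.pi_pos.le, Real.sqrt_div Real.pi_pos.le]
    have hs := Real.sqrt_pos.2 ha
    have hp := Real.sqrt_pos.2 Real.pi_pos
    have hp2 := Real.sq_sqrt Real.pi_pos.le
    field_simp
    rw [hp2]; ring
  have hlim : Tendsto (fun a => SB a - 2 * √(π * a) + DD a) atTop (𝓝 z) := by
    have := ((M_tendsto hz).add (sqrt_EE_tendsto.const_mul 4)).add DD_tendsto
    simp only [mul_zero, add_zero] at this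
    refine this.congr' ?_
    filter_upwards [eventually_gt_atTop 0] with a ha
    rw [SA_eq a ha, Real.sqrt_mul Real.pi_pos.le, Real.sqrt_div Real.pi_pos.le]
    have hs := Real.sqrt_pos.2 ha
    have hs2 := Real.sq_sqrt ha.le
    have : 2 * a * (√π / √a * (1 + 2 * EE a)) = 2 * (√π * √a) * (1 + 2 * EE a) := by
      nth_rewrite 1 [← hs2]; field_simp
    rw [this]; ring
  have := const_of_tendsto hd (eventually_gt_atTop 0) hlim ha
  linarith

lemma SC_eq {z w : ℝ} (hz : Tendsto (fun N:ℕ => ∑ k ∈ Finset.range N, 1/√((k:ℝ)+1) - 2*√(N:ℝ)) atTop (𝓝 z))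
    (hw : ∑' k:ℕ, 1/(((k:ℝ)+1)*√((k:ℝ)+1)) = -4*π*w) {a : ℝ} (ha : 0 < a) :
    SC a = a * z + 4 * √π / 3 * (a * √a) - w + QQ a := by
  have hd : ∀ a, 0 < a → HasDerivAt (fun a => SC a - a * z - 4 * √π / 3 * (a * √a) - QQ a) 0 a := by
    intro a ha
    have h1 := ((hasDerivAt_id a).mul (Real.hasDerivAt_sqrt ha.ne')).const_mul (4 * √π / 3)
    refine ((((SC_deriv ha).sub ((hasDerivAt_id a).mul_const z)).sub h1).sub (QQ_deriv ha)).congr_deriv ?_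
    rw [SB_eq hz ha, Real.sqrt_mul Real.pi_pos.le]
    have hs := Real.sqrt_pos.2 ha
    have hs2 := Real.sq_sqrt ha.le
    simp only [id]
    field_simp
    simp only [hs2]; ring_nf; simp only [hs2]; ring
  have l0 : Tendsto (fun a : ℝ => a) (𝓝[>] 0) (𝓝 0) := nhdsWithin_le_nhds
  have hpos : ∀ᶠ a : ℝ in 𝓝[>] 0, 0 < a := self_mem_nhdsWithin
  have lSC : Tendsto SC (𝓝[>] 0) (𝓝 0) := by
    have hb : Tendsto (fun a : ℝ => a ^ 2 * ∑' k : ℕ, 1 / (((k:ℝ)+1) * √((k:ℝ)+1))) (𝓝[>] 0) (𝓝 0) := by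
      simpa using (l0.pow 2).mul_const _
    refine squeeze_zero' ?_ ?_ hb
    · filter_upwards [hpos] with a ha using tsum_nonneg fun k => (SC_term ha.le k).1
    · filter_upwards [hpos] with a ha
      rw [← tsum_mul_left]
      exact (SC_summable ha.le).tsum_le_tsum (fun k => (SC_term ha.le k).2) (sum32.mul_left _)
  have lQQ : Tendsto QQ (𝓝[>] 0) (𝓝 w) := by
    have e : ∑' n : ℕ, qq 0 / (((n:ℝ)+1) * √((n:ℝ)+1)) = w := by
      have : ∀ n : ℕ, qq 0 / (((n:ℝ)+1) * √((n:ℝ)+1)) = qq 0 * (1 / (((n:ℝ)+1) * √((n:ℝ)+1))) := fun n => by ring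
      simp_rw [this]
      rw [tsum_mul_left, hw, qq]
      have := Real.pi_pos
      simp; field_simp; norm_num
    rw [← e]
    refine tendsto_tsum_of_dominated_convergence sum32 ?_ ?_
    · intro n
      refine Tendsto.div_const ?_ _
      have hc : Continuous qq := continuous_iff_continuousAt.2 fun u => (qq_deriv u).continuousAt
      have hu : Tendsto (fun a => uu a n) (𝓝[>] 0) (𝓝 0) := by
        have : Continuous (fun a => uu a n) := by unfold uu; fun_prop
        have := (this.tendsto 0).mono_left (nhdsWithin_le_nhds (s := Ioi 0))
        simpa [uu] using this
      exact (hc.tendsto 0).comp hu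
    · filter_upwards [hpos] with a ha n using QQ_term ha n
  have hlim : Tendsto (fun a => SC a - a * z - 4 * √π / 3 * (a * √a) - QQ a) (𝓝[>] 0) (𝓝 (-w)) := by
    have ls : Tendsto (fun a : ℝ => a * √a) (𝓝[>] 0) (𝓝 0) := by
      have : Continuous (fun a : ℝ => a * √a) := by fun_prop
      simpa using (this.tendsto 0).mono_left (nhdsWithin_le_nhds (s := Ioi 0))
    simpa using ((lSC.sub (l0.mul_const z)).sub (ls.const_mul (4 * √π / 3))).sub lQQ
  have := const_of_tendsto hd hpos hlim ha
  linarith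

lemma QQ_tendsto : Tendsto QQ atTop (𝓝 0) := by
  have hq : Tendsto qq atTop (𝓝 0) := by
    have h0 : Tendsto (fun u : ℝ => u * Real.exp (-u) + Real.exp (-u)) atTop (𝓝 0) := by
      have := (Real.tendsto_pow_mul_exp_neg_atTop_nhds_zero 1).add Real.tendsto_exp_neg_atTop_nhds_zero
      simpa using this
    refine squeeze_zero_norm' ?_ h0
    filter_upwards [eventually_ge_atTop 0] with u hu
    have h1 := Real.abs_cos_le_one u
    have h2 := Real.abs_sin_le_one u
    have h3 : |u * Real.sin u + (Real.sin u + Real.cos u) / 2| ≤ u + 1 := by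
      calc _ ≤ |u * Real.sin u| + |(Real.sin u + Real.cos u) / 2| := abs_add_le _ _
        _ ≤ u * 1 + (1 + 1) / 2 := by
          rw [abs_mul, abs_of_nonneg hu, abs_div, abs_of_nonneg (by norm_num : (0:ℝ) ≤ 2)]
          have := abs_add_le (Real.sin u) (Real.cos u)
          gcongr
          linarith
        _ = _ := by ring
    have h5 : 1 / (2 * π) ≤ 1 := by
      rw [div_le_one (by positivity)]; linarith [Real.pi_gt_three]
    rw [Real.norm_eq_abs, qq, abs_mul, abs_neg, abs_of_nonneg (by positivity), abs_mul, abs_of_pos (Real.exp_pos _)]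
    calc _ ≤ 1 * (Real.exp (-u) * (u + 1)) := by gcongr
      _ = _ := by ring
  have e : ∑' n : ℕ, (0:ℝ) / (((n:ℝ)+1) * √((n:ℝ)+1)) = 0 := by simp
  rw [← e]
  refine tendsto_tsum_of_dominated_convergence sum32 ?_ ?_
  · intro n
    refine Tendsto.div_const ?_ _
    refine hq.comp ?_
    unfold uu
    refine Tendsto.const_mul_atTop two_pos (Real.tendsto_sqrt_atTop.comp ?_)
    exact (tendsto_id.const_mul_atTop Real.pi_pos).atTop_mul_const (by positivity)
  · filter_upwards [eventually_gt_atTop 0] with a ha n using QQ_term ha n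

end L5
section L6
open MeasureTheory Set Filter Topology

noncomputable def hh (x : ℝ) (k : ℕ) : ℝ := ∑' j : ℕ, 1 / (x ^ 2 + (((j:ℝ)+1) * ((k:ℝ)+1)) ^ 2)

lemma sum_sq : Summable (fun j : ℕ => 1 / ((j:ℝ)+1) ^ 2) := by
  have := (summable_nat_add_iff 1).2 (Real.summable_one_div_nat_pow.2 (one_lt_two))
  refine this.congr fun k => ?_
  push_cast; rfl

lemma hh_term (x : ℝ) (j k : ℕ) : 1 / (x ^ 2 + (((j:ℝ)+1) * ((k:ℝ)+1)) ^ 2) ≤ 1 / ((k:ℝ)+1) ^ 2 * (1 / ((j:ℝ)+1) ^ 2) := by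
  have : 1 / ((k:ℝ)+1) ^ 2 * (1 / ((j:ℝ)+1) ^ 2) = 1 / ((((j:ℝ)+1) * ((k:ℝ)+1)) ^ 2) := by field_simp
  rw [this]
  gcongr
  nlinarith [sq_nonneg x]

lemma hh_summable (x : ℝ) (k : ℕ) : Summable (fun j : ℕ => 1 / (x ^ 2 + (((j:ℝ)+1) * ((k:ℝ)+1)) ^ 2)) :=
  Summable.of_nonneg_of_le (fun j => by positivity) (fun j => hh_term x j k) (sum_sq.mul_left _)

lemma hh_nonneg (x : ℝ) (k : ℕ) : 0 ≤ hh x k := tsum_nonneg fun j => by positivity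

lemma hh_le (x : ℝ) (k : ℕ) : hh x k ≤ 1 / ((k:ℝ)+1) ^ 2 * ∑' j : ℕ, 1 / ((j:ℝ)+1) ^ 2 := by
  rw [hh, ← tsum_mul_left]
  exact (hh_summable x k).tsum_le_tsum (fun j => hh_term x j k) (sum_sq.mul_left _)

lemma coth_aux (y : ℝ) (hy : 0 < y) : Real.exp (-(2 * π * y)) / (1 - Real.exp (-(2 * π * y)))
    = 1 / (2 * π * y) - 1 / 2 + y / π * ∑' n : ℕ, 1 / (y ^ 2 + ((n:ℝ)+1) ^ 2) := by
  have hz : (y:ℂ) * I ∈ Complex.integerComplement := by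
    rintro ⟨n, hn⟩
    have := congrArg Complex.im hn
    simp at this
    linarith
  have h := cot_series_rep' hz
  have hI := Complex.I_sq
  have hyc : (y:ℂ) ≠ 0 := by exact_mod_cast hy.ne'
  have hpc : (π:ℂ) ≠ 0 := by exact_mod_cast Real.pi_ne_zero
  have e1 : ∀ n : ℕ, (1 / ((y:ℂ) * I - (n + 1)) + 1 / ((y:ℂ) * I + (n + 1))) = (-2 * I * y) * ((1 / (y ^ 2 + ((n:ℝ)+1) ^ 2) : ℝ) : ℂ) := by
    intro n
    have n1 : (y:ℂ) * I - (n + 1) ≠ 0 := by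
      intro h0; have := congrArg Complex.im h0; simp at this; linarith
    have n2 : (y:ℂ) * I + (n + 1) ≠ 0 := by
      intro h0; have := congrArg Complex.im h0; simp at this; linarith
    have n3 : (y:ℂ) ^ 2 + ((n:ℂ)+1) ^ 2 ≠ 0 := by
      have : (0:ℝ) < y ^ 2 + ((n:ℝ)+1) ^ 2 := by positivity
      exact_mod_cast this.ne'
    push_cast
    field_simp
    linear_combination (2 * (y:ℂ) ^ 3 * I) * hI
  simp_rw [e1] at h
  rw [tsum_mul_left, ← Complex.ofReal_tsum, Complex.cot_eq_exp_ratio] at h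
  have e2 : (2 * I * ((π:ℂ) * (y * I))) = ((-(2 * π * y) : ℝ) : ℂ) := by
    push_cast; linear_combination (2 * (π:ℂ) * y) * hI
  rw [e2, ← Complex.ofReal_exp] at h
  set E := Real.exp (-(2 * π * y)) with hE
  have hE1 : E < 1 := by rw [hE, Real.exp_lt_one_iff]; have := mul_pos Real.two_pi_pos hy; linarith
  have hne : (1 - (E:ℂ)) ≠ 0 := by
    have : (1 - E) ≠ 0 := by linarith
    exact_mod_cast this
  set T := ∑' n : ℕ, 1 / (y ^ 2 + ((n:ℝ)+1) ^ 2) with hT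
  have key : ((E / (1 - E) : ℝ) : ℂ) = ((1 / (2 * π * y) - 1 / 2 + y / π * T : ℝ) : ℂ) := by
    push_cast
    have hI0 := Complex.I_ne_zero
    field_simp at h
    field_simp
    rw [hI] at h
    linear_combination h
  exact_mod_cast key

lemma coth_hh (x : ℝ) (hx : 0 < x) (k : ℕ) : Real.exp (-(2 * π * x) / ((k:ℝ)+1)) / (1 - Real.exp (-(2 * π * x) / ((k:ℝ)+1)))
    = ((k:ℝ)+1) / (2 * π * x) - 1 / 2 + x / π * (((k:ℝ)+1) * hh x k) := by
  have hk : (0:ℝ) < (k:ℝ) + 1 := by positivity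
  have h := coth_aux (x / ((k:ℝ)+1)) (by positivity)
  have e : -(2 * π * (x / ((k:ℝ)+1))) = -(2 * π * x) / ((k:ℝ)+1) := by ring
  rw [e] at h
  rw [h]
  have e2 : ∑' n : ℕ, 1 / ((x / ((k:ℝ)+1)) ^ 2 + ((n:ℝ)+1) ^ 2) = ((k:ℝ)+1) ^ 2 * hh x k := by
    rw [hh, ← tsum_mul_left]
    congr 1; ext n
    field_simp
  rw [e2]
  field_simp

lemma divisor_sum (g : ℕ → ℝ) {s : ℝ} (hs : HasSum (fun p : ℕ × ℕ => 1 / √((p.2:ℝ)+1) * g ((p.1+1) * (p.2+1))) s) :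
    HasSum (fun n : ℕ => rsigma (1/2) (n+1) / √((n:ℝ)+1) * g (n+1)) s := by
  have e1 : HasSum (fun p : ℕ+ × ℕ+ => 1 / √(((p.2:ℕ):ℝ)) * g ((p.1:ℕ) * (p.2:ℕ))) s := by
    rw [← (Equiv.prodCongr Equiv.pnatEquivNat Equiv.pnatEquivNat).hasSum_iff] at hs
    refine (my_hasSum_congr fun p => ?_).1 hs
    have h1 : (Equiv.pnatEquivNat p.1) + 1 = (p.1 : ℕ) := by simp
    have h2 : (Equiv.pnatEquivNat p.2) + 1 = (p.2 : ℕ) := by simp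
    have h3 : ((Equiv.pnatEquivNat p.2 : ℕ) : ℝ) + 1 = ((p.2 : ℕ) : ℝ) := by exact_mod_cast h2
    simp only [Function.comp, Equiv.prodCongr_apply, Prod.map, h1, h2, h3]
  rw [← sigmaAntidiagonalEquivProd.hasSum_iff] at e1
  have e2 := e1.sigma (g := fun n : ℕ+ => rsigma (1/2) n / √(((n:ℕ):ℝ)) * g n) ?_
  · rw [← Equiv.pnatEquivNat.symm.hasSum_iff] at e2
    refine (my_hasSum_congr fun n => ?_).1 e2
    simp
  · intro n
    have := hasSum_fintype (fun c : Nat.divisorsAntidiagonal n => ((fun p : ℕ+ × ℕ+ => 1 / √(((p.2:ℕ):ℝ)) * g ((p.1:ℕ) * (p.2:ℕ))) ∘ sigmaAntidiagonalEquivProd) ⟨n, c⟩)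
    convert this using 1
    simp only [Function.comp, sigmaAntidiagonalEquivProd, divisorsAntidiagonalFactors, Equiv.coe_fn_mk, PNat.mk_coe]
    rw [Finset.univ_eq_attach, Finset.sum_attach (Nat.divisorsAntidiagonal n) (fun x : ℕ × ℕ => 1 / √((x.2:ℝ)) * g (x.1 * x.2)), Nat.sum_divisorsAntidiagonal (fun a b : ℕ => 1 / √((b:ℝ)) * g (a * b)), rsigma, Finset.sum_div, Finset.sum_mul]
    refine Finset.sum_congr rfl fun d hd => ?_
    have hdv := Nat.dvd_of_mem_divisors hd
    have hd0 : 0 < d := Nat.pos_of_mem_divisors hd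
    rw [Nat.mul_div_cancel' hdv, ← Real.sqrt_eq_rpow]
    congr 1
    have hn : ((n:ℕ):ℝ) = d * (((n:ℕ)/d : ℕ):ℝ) := by
      exact_mod_cast (Nat.mul_div_cancel' hdv).symm
    have hdp : 0 < √(d:ℝ) := Real.sqrt_pos.2 (by exact_mod_cast hd0)
    nth_rewrite 1 [hn]
    rw [Real.sqrt_mul (by positivity)]
    field_simp

end L6
section L7
open MeasureTheory Set Filter Topology

noncomputable def vv (x : ℝ) (n : ℕ) : ℝ := 2 * π * √(2 * (n:ℝ) * x)

lemma uu_vv {x : ℝ} (hx : 0 < x) (j n : ℕ) : uu (2 * π * x * ((j:ℝ)+1)) n = vv x ((j+1)*(n+1)) := by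
  rw [uu, vv]
  have : π * (2 * π * x * ((j:ℝ)+1)) * ((n:ℝ)+1) = π ^ 2 * (2 * (((j+1)*(n+1) : ℕ):ℝ) * x) := by
    push_cast; ring
  rw [this, Real.sqrt_mul (by positivity), Real.sqrt_sq Real.pi_pos.le]
  ring

lemma summable_vv {x : ℝ} (hx : 0 < x) : Summable (fun p : ℕ × ℕ => Real.exp (-(vv x ((p.1+1)*(p.2+1))))) := by
  set c : ℝ := π * √(2 * x) with hc
  have hc0 : 0 < c := mul_pos Real.pi_pos (Real.sqrt_pos.2 (by positivity))
  have h1 := summable_exp_sqrt c hc0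
  have h2 := h1.mul_of_nonneg h1 (fun n => (Real.exp_pos _).le) (fun n => (Real.exp_pos _).le)
  refine Summable.of_nonneg_of_le (fun p => (Real.exp_pos _).le) (fun p => ?_) h2
  rw [← Real.exp_add, Real.exp_le_exp]
  have a1 := one_le_sqrt_nat p.1
  have a2 := one_le_sqrt_nat p.2
  have e : vv x ((p.1+1)*(p.2+1)) = 2 * c * (√((p.1:ℝ)+1) * √((p.2:ℝ)+1)) := by
    rw [vv, hc, ← Real.sqrt_mul (by positivity)]
    have : 2 * (((p.1+1)*(p.2+1) : ℕ):ℝ) * x = (2 * x) * (((p.1:ℝ)+1) * ((p.2:ℝ)+1)) := by push_cast; ring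
    rw [this, Real.sqrt_mul (by positivity)]; ring
  rw [e]
  have : √((p.1:ℝ)+1) + √((p.2:ℝ)+1) ≤ 2 * (√((p.1:ℝ)+1) * √((p.2:ℝ)+1)) := by nlinarith
  nlinarith

lemma summable_vv_mul {x : ℝ} (hx : 0 < x) (c : ℕ × ℕ → ℝ) (hc : ∀ p, |c p| ≤ 1) :
    Summable (fun p : ℕ × ℕ => Real.exp (-(vv x ((p.1+1)*(p.2+1)))) * c p) := by
  refine Summable.of_norm_bounded (summable_vv hx) fun p => ?_
  rw [norm_mul, Real.norm_of_nonneg (Real.exp_pos _).le]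
  exact mul_le_of_le_one_right (Real.exp_pos _).le (hc p)

lemma abs_div_sqrt {c : ℝ} (hc : |c| ≤ 1) (n : ℕ) : |c / √((n:ℝ)+1)| ≤ 1 := by
  have := one_le_sqrt_nat n
  rw [abs_div, abs_of_pos (by linarith : 0 < √((n:ℝ)+1)), div_le_one (by linarith)]
  linarith

lemma S_hasSum {x : ℝ} (hx : 0 < x) :
    HasSum (fun j : ℕ => EE (2 * π * x * ((j:ℝ)+1)) / √((j:ℝ)+1) - DD (2 * π * x * ((j:ℝ)+1)))
      (∑' n : ℕ, rsigma (1 / 2) (n + 1) / √((n:ℝ)+1) * (Real.exp (-(vv x (n+1))) * Real.sin (vv x (n+1)))) := by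
  set C1 : ℕ × ℕ → ℝ := fun p => Real.exp (-(vv x ((p.1+1)*(p.2+1)))) * (Real.cos (vv x ((p.1+1)*(p.2+1))) / √((p.1:ℝ)+1)) with hC1
  set C2 : ℕ × ℕ → ℝ := fun p => Real.exp (-(vv x ((p.1+1)*(p.2+1)))) * (Real.cos (vv x ((p.1+1)*(p.2+1))) / √((p.2:ℝ)+1)) with hC2
  set S2 : ℕ × ℕ → ℝ := fun p => Real.exp (-(vv x ((p.1+1)*(p.2+1)))) * (Real.sin (vv x ((p.1+1)*(p.2+1))) / √((p.2:ℝ)+1)) with hS2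
  have s1 : Summable C1 := summable_vv_mul hx _ fun p => abs_div_sqrt (Real.abs_cos_le_one _) _
  have s2 : Summable C2 := summable_vv_mul hx _ fun p => abs_div_sqrt (Real.abs_cos_le_one _) _
  have s3 : Summable S2 := summable_vv_mul hx _ fun p => abs_div_sqrt (Real.abs_sin_le_one _) _
  have esw : ∑' p, C1 p = ∑' p, C2 p := by
    rw [← (Equiv.prodComm ℕ ℕ).tsum_eq]
    refine tsum_congr fun p => ?_
    simp only [hC1, hC2, Equiv.prodComm_apply, Prod.fst_swap, Prod.snd_swap, mul_comm (p.2+1)]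
  have hdiv : HasSum (fun n : ℕ => rsigma (1/2) (n+1) / √((n:ℝ)+1) * (Real.exp (-(vv x (n+1))) * Real.sin (vv x (n+1)))) (∑' p, S2 p) := by
    refine divisor_sum (fun n => Real.exp (-(vv x n)) * Real.sin (vv x n)) ?_
    refine (my_hasSum_congr fun p => ?_).1 s3.hasSum
    simp only [hS2]; ring
  rw [hdiv.tsum_eq]
  have htot : HasSum (fun p => C1 p - (C2 p - S2 p)) (∑' p, S2 p) := by
    have := s1.hasSum.sub (s2.hasSum.sub s3.hasSum)
    rw [esw] at this
    simpa using this
  refine htot.prod_fiberwise fun j => ?_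
  have ha : 0 < 2 * π * x * ((j:ℝ)+1) := by positivity
  have h1 := (EE_summable ha).hasSum.div_const (√((j:ℝ)+1))
  have h2 := (DD_summable ha).hasSum
  refine (my_hasSum_congr fun n => ?_).1 (h1.sub h2)
  simp only [uu_vv hx, hC1, hC2, hS2]
  ring

lemma h1_sum (x : ℝ) : Summable (fun k : ℕ => hh x k / √((k:ℝ)+1)) := by
  refine Summable.of_nonneg_of_le (fun k => div_nonneg (hh_nonneg x k) (Real.sqrt_nonneg _)) (fun k => ?_) (sum_sq.mul_right (∑' j : ℕ, 1 / ((j:ℝ)+1) ^ 2))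
  exact (div_le_self (hh_nonneg x k) (one_le_sqrt_nat k)).trans (hh_le x k)

lemma sqrt_mul_sq (k : ℕ) : √((k:ℝ)+1) * (1 / ((k:ℝ)+1) ^ 2) = 1 / (((k:ℝ)+1) * √((k:ℝ)+1)) := by
  have hk : (0:ℝ) < (k:ℝ) + 1 := by positivity
  have h1 := one_le_sqrt_nat k
  have h2 := Real.sq_sqrt hk.le
  field_simp
  rw [h2]

lemma h2_sum (x : ℝ) : Summable (fun k : ℕ => √((k:ℝ)+1) * hh x k) := by
  refine Summable.of_nonneg_of_le (fun k => mul_nonneg (Real.sqrt_nonneg _) (hh_nonneg x k)) (fun k => ?_) (sum32.mul_right (∑' j : ℕ, 1 / ((j:ℝ)+1) ^ 2))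
  rw [← sqrt_mul_sq, mul_assoc]
  exact mul_le_mul_of_nonneg_left (hh_le x k) (Real.sqrt_nonneg _)

lemma R_eq (x : ℝ) : ∑' n : ℕ, rsigma (1/2) (n+1) / √((n:ℝ)+1) * ((√x - √(2 * ((n:ℝ)+1))) / (x ^ 2 + ((n:ℝ)+1) ^ 2))
    = √x * ∑' k : ℕ, hh x k / √((k:ℝ)+1) - √2 * ∑' k : ℕ, √((k:ℝ)+1) * hh x k := by
  set A : ℕ × ℕ → ℝ := fun p => 1 / √((p.2:ℝ)+1) * (1 / (x ^ 2 + (((p.1:ℝ)+1) * ((p.2:ℝ)+1)) ^ 2)) with hA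
  set B : ℕ × ℕ → ℝ := fun p => √((p.1:ℝ)+1) * (1 / (x ^ 2 + (((p.1:ℝ)+1) * ((p.2:ℝ)+1)) ^ 2)) with hB
  have hAs : Summable A := by
    have h2 := sum_sq.mul_of_nonneg sum_sq (fun n => by positivity) (fun n => by positivity)
    refine Summable.of_nonneg_of_le (fun p => by positivity) (fun p => ?_) h2
    have h1 := one_le_sqrt_nat p.2
    calc A p ≤ 1 * (1 / ((p.2:ℝ)+1) ^ 2 * (1 / ((p.1:ℝ)+1) ^ 2)) := by
          rw [hA]
          gcongr ?_ * ?_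
          · rw [div_le_one (by linarith)]; exact h1
          · exact hh_term x _ _
      _ = _ := by ring
  have hBs : Summable B := by
    have h2 := sum32.mul_of_nonneg sum_sq (fun n => by positivity) (fun n => by positivity)
    refine Summable.of_nonneg_of_le (fun p => by positivity) (fun p => ?_) h2
    calc B p ≤ √((p.1:ℝ)+1) * (1 / ((p.2:ℝ)+1) ^ 2 * (1 / ((p.1:ℝ)+1) ^ 2)) := by
          rw [hB]
          gcongr ?_ * ?_
          exact hh_term x _ _
      _ = (√((p.1:ℝ)+1) * (1 / ((p.1:ℝ)+1) ^ 2)) * (1 / ((p.2:ℝ)+1) ^ 2) := by ring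
      _ = _ := by rw [sqrt_mul_sq]
  have eA : ∑' p, A p = ∑' k : ℕ, hh x k / √((k:ℝ)+1) := by
    rw [← (Equiv.prodComm ℕ ℕ).tsum_eq]
    have hs : Summable (fun p => A (Equiv.prodComm ℕ ℕ p)) := (Equiv.prodComm ℕ ℕ).summable_iff.2 hAs
    refine (hs.hasSum.prod_fiberwise fun k => ?_).tsum_eq.symm
    refine (my_hasSum_congr fun n => ?_).1 ((hh_summable x k).hasSum.div_const (√((k:ℝ)+1)))
    simp only [hA, Equiv.prodComm_apply, Prod.fst_swap, Prod.snd_swap]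
    ring
  have eB : ∑' p, B p = ∑' k : ℕ, √((k:ℝ)+1) * hh x k := by
    refine (hBs.hasSum.prod_fiberwise fun k => ?_).tsum_eq.symm
    refine (my_hasSum_congr fun n => ?_).1 ((hh_summable x k).hasSum.mul_left (√((k:ℝ)+1)))
    simp only [hB]
    rw [mul_comm ((n:ℝ)+1)]
  rw [← eA, ← eB]
  have hsum := (hAs.hasSum.mul_left (√x)).sub (hBs.hasSum.mul_left (√2))
  have := divisor_sum (fun n : ℕ => (√x - √(2 * (n:ℝ))) / (x ^ 2 + (n:ℝ) ^ 2)) ((my_hasSum_congr fun p => ?_).1 hsum)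
  · have h := this.tsum_eq
    push_cast at h
    exact h
  · simp only [hA, hB]
    have h1 := one_le_sqrt_nat p.2
    push_cast
    rw [Real.sqrt_mul (by norm_num : (0:ℝ) ≤ 2), Real.sqrt_mul (by positivity : (0:ℝ) ≤ (p.1:ℝ)+1)]
    have hp : 0 < x ^ 2 + (((p.1:ℝ)+1) * ((p.2:ℝ)+1)) ^ 2 := by positivity
    field_simp

end L7
section L8
open MeasureTheory Set Filter Topology

noncomputable def RA (x a : ℝ) : ℝ := ∑' k : ℕ, hh x k / √((k:ℝ)+1) * (1 - Real.exp (-a / ((k:ℝ)+1)))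
noncomputable def RB (x a : ℝ) : ℝ := ∑' k : ℕ, √((k:ℝ)+1) * hh x k * (1 - Real.exp (-a / ((k:ℝ)+1)))

lemma one_sub_exp_mem {a : ℝ} (ha : 0 ≤ a) (k : ℕ) : ‖1 - Real.exp (-a / ((k:ℝ)+1))‖ ≤ 1 := by
  have h1 := exp_neg_div_le_one ha k
  have h2 := Real.exp_pos (-a / ((k:ℝ)+1))
  rw [Real.norm_of_nonneg (by linarith)]; linarith

lemma R_term {f : ℕ → ℝ} (hf : ∀ k, 0 ≤ f k) {a : ℝ} (ha : 0 ≤ a) (k : ℕ) : ‖f k * (1 - Real.exp (-a / ((k:ℝ)+1)))‖ ≤ f k := by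
  rw [norm_mul, Real.norm_of_nonneg (hf k)]
  exact mul_le_of_le_one_right (hf k) (one_sub_exp_mem ha k)

lemma R_lim {f : ℕ → ℝ} (hf : ∀ k, 0 ≤ f k) (hs : Summable f) :
    Tendsto (fun a : ℝ => ∑' k : ℕ, f k * (1 - Real.exp (-a / ((k:ℝ)+1)))) atTop (𝓝 (∑' k, f k)) := by
  refine tendsto_tsum_of_dominated_convergence hs ?_ ?_
  · intro k
    simpa using ((exp_lim (by positivity : (0:ℝ) < (k:ℝ)+1)).const_sub 1).const_mul (f k)
  · filter_upwards [eventually_ge_atTop 0] with a ha k using R_term hf ha k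

lemma SA_lim : Tendsto SA atTop (𝓝 0) := by
  have e : ∑' n : ℕ, (0:ℝ) / (((n:ℝ)+1) * √((n:ℝ)+1)) = 0 := by simp
  rw [← e]
  refine tendsto_tsum_of_dominated_convergence sum32 ?_ ?_
  · intro k
    exact (exp_lim (by positivity : (0:ℝ) < (k:ℝ)+1)).div_const _
  · filter_upwards [eventually_ge_atTop 0] with a ha k
    rw [Real.norm_of_nonneg (by positivity)]
    gcongr
    exact exp_neg_div_le_one ha k

lemma geom_k (x : ℝ) (hx : 0 < x) (k J : ℕ) :
    ∑ j ∈ Finset.range J, Real.exp (-(2 * π * x * ((j:ℝ)+1)) / ((k:ℝ)+1)) =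
      (1 - Real.exp (-(2 * π * x * J) / ((k:ℝ)+1))) * (((k:ℝ)+1) / (2 * π * x) - 1 / 2 + x / π * (((k:ℝ)+1) * hh x k)) := by
  rw [← coth_hh x hx k]
  set E := Real.exp (-(2 * π * x) / ((k:ℝ)+1)) with hE
  have hE1 : E < 1 := by
    rw [hE, Real.exp_lt_one_iff, neg_div]
    have : 0 < 2 * π * x / ((k:ℝ)+1) := by positivity
    linarith
  have e1 : ∀ j : ℕ, Real.exp (-(2 * π * x * (j:ℝ)) / ((k:ℝ)+1)) = E ^ j := by
    intro j
    rw [hE, ← Real.exp_nat_mul]; congr 1; ring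
  have e2 : ∀ j : ℕ, Real.exp (-(2 * π * x * ((j:ℝ)+1)) / ((k:ℝ)+1)) = E ^ j * E := by
    intro j
    have := e1 (j+1)
    push_cast at this
    rw [this, pow_succ]
  rw [e1, Finset.sum_congr rfl fun j _ => e2 j, ← Finset.sum_mul, geom_sum_eq hE1.ne]
  have h1 : E - 1 ≠ 0 := by linarith
  have h2 : 1 - E ≠ 0 := by linarith
  field_simp
  ring

lemma sum_SA (x : ℝ) (hx : 0 < x) (J : ℕ) : ∑ j ∈ Finset.range J, SA (2 * π * x * ((j:ℝ)+1)) =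
    SB (2 * π * x * J) / (2 * π * x) - 1 / 2 * ((∑' k:ℕ, 1/(((k:ℝ)+1)*√((k:ℝ)+1))) - SA (2 * π * x * J)) + x / π * RA x (2 * π * x * J) := by
  have ha : 0 ≤ 2 * π * x * (J:ℝ) := by positivity
  have hr : Summable (fun k : ℕ => hh x k / √((k:ℝ)+1) * (1 - Real.exp (-(2 * π * x * (J:ℝ)) / ((k:ℝ)+1)))) :=
    Summable.of_norm_bounded (h1_sum x) (R_term (fun k => div_nonneg (hh_nonneg x k) (Real.sqrt_nonneg _)) ha)
  have h1 := (((SB_summable ha).hasSum.div_const (2 * π * x)).sub ((sum32.hasSum.sub (SA_summable ha).hasSum).mul_left (1/2))).add (hr.hasSum.mul_left (x / π))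
  have h2 := hasSum_sum (s := Finset.range J) (f := fun (j : ℕ) (k : ℕ) => Real.exp (-(2 * π * x * ((j:ℝ)+1)) / ((k:ℝ)+1)) / (((k:ℝ)+1) * √((k:ℝ)+1)))
    (fun j _ => (SA_summable (by positivity : 0 ≤ 2 * π * x * ((j:ℝ)+1))).hasSum)
  refine h2.unique ((my_hasSum_congr fun k => ?_).1 h1)
  rw [← Finset.sum_div, geom_k x hx]
  have hs := one_le_sqrt_nat k
  have hp := Real.pi_pos
  have hk : (0:ℝ) < (k:ℝ) + 1 := by positivity
  field_simp

lemma sum_SB (x : ℝ) (hx : 0 < x) (J : ℕ) : ∑ j ∈ Finset.range J, SB (2 * π * x * ((j:ℝ)+1)) =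
    SC (2 * π * x * J) / (2 * π * x) + 1 / 2 * SB (2 * π * x * J) - x / π * RB x (2 * π * x * J) := by
  have ha : 0 ≤ 2 * π * x * (J:ℝ) := by positivity
  have hr : Summable (fun k : ℕ => √((k:ℝ)+1) * hh x k * (1 - Real.exp (-(2 * π * x * (J:ℝ)) / ((k:ℝ)+1)))) :=
    Summable.of_norm_bounded (h2_sum x) (R_term (fun k => mul_nonneg (Real.sqrt_nonneg _) (hh_nonneg x k)) ha)
  have h1 := (((SC_summable ha).hasSum.div_const (2 * π * x)).add ((SB_summable ha).hasSum.mul_left (1/2))).sub (hr.hasSum.mul_left (x / π))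
  have h2 := hasSum_sum (s := Finset.range J) (f := fun (j : ℕ) (k : ℕ) => (1 - Real.exp (-(2 * π * x * ((j:ℝ)+1)) / ((k:ℝ)+1))) / √((k:ℝ)+1))
    (fun j _ => (SB_summable (by positivity : 0 ≤ 2 * π * x * ((j:ℝ)+1))).hasSum)
  refine h2.unique ((my_hasSum_congr fun k => ?_).1 h1)
  rw [← Finset.sum_div, Finset.sum_sub_distrib, geom_k x hx]
  have hp := Real.pi_pos
  have hk : (0:ℝ) < (k:ℝ) + 1 := by positivity
  have hs := Real.sqrt_pos.2 hk
  have hs2 := Real.sq_sqrt hk.le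
  simp only [Finset.sum_const, Finset.card_range, nsmul_eq_mul, mul_one]
  set s := √((k:ℝ)+1)
  rw [eq_div_iff hs.ne', ← hs2]
  field_simp
  ring

lemma main_real (x : ℝ) (hx : 0 < x) {z w : ℝ} (hz : Tendsto (fun N:ℕ => ∑ k ∈ Finset.range N, 1/√((k:ℝ)+1) - 2*√(N:ℝ)) atTop (𝓝 z))
    (hw : Tendsto (fun N:ℕ => ∑ k ∈ Finset.range N, √((k:ℝ)+1) - 2/3*(N*√(N:ℝ)) - 1/2*√(N:ℝ)) atTop (𝓝 w))
    (hZ : ∑' k:ℕ, 1/(((k:ℝ)+1)*√((k:ℝ)+1)) = -4*π*w) :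
    ∑' n : ℕ, rsigma (1 / 2) (n + 1) / √((n:ℝ)+1) * (Real.exp (-(vv x (n+1))) * Real.sin (vv x (n+1)))
    = z / (2 * π * √(2 * x)) - (1 / (2 * π * x) + π * √(2 * x)) * w
      + x / (π * √2) * ∑' n : ℕ, rsigma (1/2) (n+1) / √((n:ℝ)+1) * ((√x - √(2 * ((n:ℝ)+1))) / (x ^ 2 + ((n:ℝ)+1) ^ 2)) := by
  rw [R_eq]
  set A := ∑' k : ℕ, hh x k / √((k:ℝ)+1) with hA
  set B := ∑' k : ℕ, √((k:ℝ)+1) * hh x k with hB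
  set s := √(2 * x) with hs
  have hp := Real.pi_pos
  have hs0 : 0 < s := Real.sqrt_pos.2 (by positivity)
  have hs2 : s ^ 2 = 2 * x := Real.sq_sqrt (by positivity)
  have haJ : Tendsto (fun J : ℕ => 2 * π * x * (J:ℝ)) atTop atTop :=
    tendsto_natCast_atTop_atTop.const_mul_atTop (by positivity)
  have lA : Tendsto (fun J : ℕ => RA x (2 * π * x * (J:ℝ))) atTop (𝓝 A) :=
    (R_lim (fun k => div_nonneg (hh_nonneg x k) (Real.sqrt_nonneg _)) (h1_sum x)).comp haJ
  have lB : Tendsto (fun J : ℕ => RB x (2 * π * x * (J:ℝ))) atTop (𝓝 B) :=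
    (R_lim (fun k => mul_nonneg (Real.sqrt_nonneg _) (hh_nonneg x k)) (h2_sum x)).comp haJ
  have lD := DD_tendsto.comp haJ
  have lQ := QQ_tendsto.comp haJ
  have lS := SA_lim.comp haJ
  have hlim : Tendsto (fun J : ℕ => (1/2 * s * ((z - DD (2 * π * x * J)) / (2 * π * x)) - s / 4 * (-4*π*w - SA (2 * π * x * J)) + 1/2 * s * (x / π) * RA x (2 * π * x * J))
      + (-w / (2 * π * x) + QQ (2 * π * x * J) / (2 * π * x) + 1 / 2 * (z - DD (2 * π * x * J)) - x / π * RB x (2 * π * x * J))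
      - 1 / 2 * (∑ k ∈ Finset.range J, 1/√((k:ℝ)+1) - 2*√(J:ℝ))
      - 2 * π * s * (∑ k ∈ Finset.range J, √((k:ℝ)+1) - 2/3*(J*√(J:ℝ)) - 1/2*√(J:ℝ))) atTop
      (𝓝 ((1/2 * s * ((z - 0) / (2 * π * x)) - s / 4 * (-4*π*w - 0) + 1/2 * s * (x / π) * A)
      + (-w / (2 * π * x) + 0 / (2 * π * x) + 1 / 2 * (z - 0) - x / π * B)
      - 1 / 2 * z - 2 * π * s * w)) := by
    refine Tendsto.sub (Tendsto.sub (Tendsto.add (Tendsto.add (Tendsto.sub ?_ ?_) ?_) (Tendsto.sub (Tendsto.add (Tendsto.add ?_ ?_) ?_) ?_)) ?_) ?_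
    · exact ((lD.const_sub z).div_const _).const_mul _
    · exact (lS.const_sub _).const_mul _
    · exact lA.const_mul _
    · exact tendsto_const_nhds
    · exact lQ.div_const _
    · exact (lD.const_sub z).const_mul _
    · exact lB.const_mul _
    · exact hz.const_mul _
    · exact hw.const_mul _
  have hS := (S_hasSum hx).tendsto_sum_nat
  have hEq : ∀ᶠ J : ℕ in atTop, (1/2 * s * ((z - DD (2 * π * x * J)) / (2 * π * x)) - s / 4 * (-4*π*w - SA (2 * π * x * J)) + 1/2 * s * (x / π) * RA x (2 * π * x * J))
      + (-w / (2 * π * x) + QQ (2 * π * x * J) / (2 * π * x) + 1 / 2 * (z - DD (2 * π * x * J)) - x / π * RB x (2 * π * x * J))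
      - 1 / 2 * (∑ k ∈ Finset.range J, 1/√((k:ℝ)+1) - 2*√(J:ℝ))
      - 2 * π * s * (∑ k ∈ Finset.range J, √((k:ℝ)+1) - 2/3*(J*√(J:ℝ)) - 1/2*√(J:ℝ))
      = ∑ j ∈ Finset.range J, (EE (2 * π * x * ((j:ℝ)+1)) / √((j:ℝ)+1) - DD (2 * π * x * ((j:ℝ)+1))) := by
    filter_upwards [eventually_gt_atTop 0] with J hJ
    have hJ : (0:ℝ) < J := by exact_mod_cast hJ
    have hpa : ∀ t : ℝ, 0 ≤ t → √(π * (2 * π * x * t)) = π * s * √t := by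
      intro t ht
      have : π * (2 * π * x * t) = π ^ 2 * ((2 * x) * t) := by ring
      rw [this, Real.sqrt_mul (by positivity), Real.sqrt_sq hp.le, Real.sqrt_mul (by positivity), hs]; ring
    have eterm : ∀ j : ℕ, EE (2 * π * x * ((j:ℝ)+1)) / √((j:ℝ)+1) - DD (2 * π * x * ((j:ℝ)+1)) =
        1/2 * s * SA (2 * π * x * ((j:ℝ)+1)) + SB (2 * π * x * ((j:ℝ)+1)) - 1/2 * (1 / √((j:ℝ)+1)) - z - 2 * π * s * √((j:ℝ)+1) := by
      intro j
      have hj : (0:ℝ) < (j:ℝ)+1 := by positivity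
      have ha : 0 < 2 * π * x * ((j:ℝ)+1) := by positivity
      rw [SB_eq hz ha, SA_eq _ ha, hpa _ hj.le]
      have : √(π / (2 * π * x * ((j:ℝ)+1))) = 1 / (s * √((j:ℝ)+1)) := by
        have : π / (2 * π * x * ((j:ℝ)+1)) = 1 / ((2 * x) * ((j:ℝ)+1)) := by field_simp
        rw [this, Real.sqrt_div zero_le_one, Real.sqrt_one, Real.sqrt_mul (by positivity)]
      rw [this]
      have hq := one_le_sqrt_nat j
      field_simp
      ring
    rw [Finset.sum_congr rfl fun j _ => eterm j]
    simp only [Finset.sum_sub_distrib, Finset.sum_add_distrib, ← Finset.mul_sum, Finset.sum_const, Finset.card_range, nsmul_eq_mul]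
    rw [sum_SA x hx, sum_SB x hx, hZ]
    have ha : 0 < 2 * π * x * (J:ℝ) := by positivity
    rw [SC_eq hz hZ ha, SB_eq hz ha, hpa _ hJ.le]
    have hsq : √(2 * π * x * (J:ℝ)) = √π * s * √(J:ℝ) := by
      have : 2 * π * x * (J:ℝ) = π * (2 * x) * J := by ring
      rw [this, Real.sqrt_mul (by positivity), Real.sqrt_mul (by positivity)]
    rw [hsq]
    have hpi : √π * √π = π := Real.mul_self_sqrt hp.le
    have e3 : 4 * √π / 3 * (2 * π * x * (J:ℝ) * (√π * s * √(J:ℝ))) = 4 * π / 3 * (2 * π * x * (J:ℝ) * (s * √(J:ℝ))) := by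
      calc _ = 4 * (√π * √π) / 3 * (2 * π * x * (J:ℝ) * (s * √(J:ℝ))) := by ring
        _ = _ := by rw [hpi]
    rw [e3]
    have hx2 : x = s ^ 2 / 2 := by linarith
    rw [hx2]
    generalize DD _ = d
    generalize QQ _ = q
    generalize SA _ = sa
    generalize RA _ _ = ra
    generalize RB _ _ = rb
    field_simp
    ring
  have := tendsto_nhds_unique hS (hlim.congr' hEq)
  rw [this]
  have h2 : (0:ℝ) < √2 := by positivity
  have hxs : 0 < √x := Real.sqrt_pos.2 hx
  have h22 : √2 ^ 2 = 2 := Real.sq_sqrt (by norm_num)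
  have hss : s = √2 * √x := by rw [hs, Real.sqrt_mul (by norm_num)]
  have e1 : 1/2 * s * (z / (2 * π * x)) = z / (2 * π * s) := by
    have hx2 : x = s ^ 2 / 2 := by linarith
    rw [hx2]; field_simp
  have e2 : x / (π * √2) * (√x * A - √2 * B) = 1/2 * s * (x / π) * A - x / π * B := by
    rw [hss]; field_simp; linear_combination (-(√x * A)) * h22
  rw [e2]
  simp only [sub_zero]
  rw [e1]
  ring

end L8

theorem corollary_half_sin (x : ℝ) (hx : 0 < x) (hxint : ∀ k : ℤ, x ≠ (k : ℝ)) :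
    (∑' n : ℕ, ((rsigma (1 / 2) (n + 1) / Real.sqrt ((n : ℝ) + 1) *
        Real.exp (-(2 * π * Real.sqrt (2 * ((n : ℝ) + 1) * x))) *
        Real.sin (2 * π * Real.sqrt (2 * ((n : ℝ) + 1) * x)) : ℝ) : ℂ))
    = riemannZeta (1 / 2) / ((2 * π * Real.sqrt (2 * x) : ℝ) : ℂ)
      - ((1 / (2 * π * x) + π * Real.sqrt (2 * x) : ℝ) : ℂ) * riemannZeta (-1 / 2)
      + ((x / (π * Real.sqrt 2) : ℝ) : ℂ) *
        ∑' n : ℕ, ((rsigma (1 / 2) (n + 1) / Real.sqrt ((n : ℝ) + 1) *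
          ((Real.sqrt x - Real.sqrt (2 * ((n : ℝ) + 1))) /
            (x ^ 2 + ((n : ℝ) + 1) ^ 2)) : ℝ) : ℂ) := by
  obtain ⟨z, hz, hzl⟩ := zeta_half
  obtain ⟨w, hw, hwl⟩ := zeta_neg_half
  have hZ := zeta_three_half
  rw [hw] at hZ
  have hZ' : ∑' k:ℕ, 1/(((k:ℝ)+1)*√((k:ℝ)+1)) = -4*π*w := by exact_mod_cast hZ
  have key := main_real x hx hzl hwl hZ'
  rw [hz, hw, ← Complex.ofReal_tsum, ← Complex.ofReal_tsum]
  have e : (∑' n : ℕ, rsigma (1 / 2) (n + 1) / Real.sqrt ((n : ℝ) + 1) *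
        Real.exp (-(2 * π * Real.sqrt (2 * ((n : ℝ) + 1) * x))) *
        Real.sin (2 * π * Real.sqrt (2 * ((n : ℝ) + 1) * x))) = ∑' n : ℕ, rsigma (1 / 2) (n + 1) / √((n:ℝ)+1) * (Real.exp (-(vv x (n+1))) * Real.sin (vv x (n+1))) := by
    refine tsum_congr fun n => ?_
    rw [vv]; push_cast; ring
  rw [e, key]
  push_cast
  ring
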